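/- Let H be a 2-full, marked, aperiodic and primitive substitution over a finite alphabet A. There exists a continuous function U : A^ℕ → ℝ with R(U) = U such that the following holds. Let α > 0 and let V : A^ℕ → ℝ satisfy V ≡ 0 on K and, for every y ∉ K with δ(y) = p, V(y) = g(y)/p^α + h(y)/p^α, where g : A^ℕ → ℝ is continuous and positive and h : A^ℕ → ℝ is continuous with h ≡ 0 on K. Then for every x ∈ A^ℕ \ K: lim_{m→∞} R^m V(x) = 0 if α > 1; lim_{m→∞} R^m V(x) = +∞ if α < 1; and lim_{m→∞} R^m V(x) = (∫ g dμ_K) · U(x) if α = 1. -/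

import Mathlib

open Filter Topology MeasureTheory

variable {A : Type*}

/-- The shift map on infinite words. -/
def shift (x : ℕ → A) : ℕ → A := fun n => x (n + 1)

/-- Image of a finite word under a substitution. -/
def wordMap (H : A → List A) (w : List A) : List A := w.flatMap H

/-- Image of an infinite word under a substitution (each `H a` nonempty makes this the
infinite concatenation `H(x₀)H(x₁)⋯`). -/
def substSeq (H : A → List A) (x : ℕ → A) : ℕ → A :=
  fun n => (wordMap H ((List.range (n + 1)).map x)).getD n (x 0)

/-- The prefix of length `n` of an infinite word. -/
def prefixWord (x : ℕ → A) (n : ℕ) : List A := (List.range n).map x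

/-- The factor of length `n` at position `i` of an infinite word. -/
def factorAt (x : ℕ → A) (i n : ℕ) : List A := (List.range n).map fun j => x (i + j)

/-- The language of an infinite word: the set of its finite factors. -/
def Lang (u : ℕ → A) : Set (List A) := {w | ∃ i, w = factorAt u i w.length}

/-- A sequence is (purely) periodic for the shift. -/
def PeriodicSeq (x : ℕ → A) : Prop := ∃ m, 0 < m ∧ ∀ n, x (n + m) = x n

/-- `u` is a fixed point of the substitution `H`. -/
def IsFixedPointSubst (H : A → List A) (u : ℕ → A) : Prop := substSeq H u = u

/-- `H` is primitive: some power of `H` maps every letter onto a word containing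
every letter. -/
def PrimitiveSubst (H : A → List A) : Prop :=
  ∃ k, 0 < k ∧ ∀ a b : A, b ∈ (wordMap H)^[k] [a]

/-- `H` is aperiodic: no fixed point of `H` is periodic for the shift. -/
def AperiodicSubst (H : A → List A) : Prop :=
  ∀ u : ℕ → A, IsFixedPointSubst H u → ¬ PeriodicSeq u

/-- `H` is marked: first letters of images are pairwise distinct, and so are last letters. -/
def MarkedSubst (H : A → List A) (hne : ∀ a, H a ≠ []) : Prop :=
  Function.Injective (fun a => (H a).head (hne a)) ∧
  Function.Injective (fun a => (H a).getLast (hne a))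

/-- `H` is 2-full (with respect to the fixed point `u`): every word of length 2 belongs
to the language. -/
def TwoFull (H : A → List A) (u : ℕ → A) : Prop :=
  ∀ w : List A, w.length = 2 → w ∈ Lang u

/-- The attractor `K`: closure of the shift-orbit of the fixed point `u`. -/
def orbitClosure [TopologicalSpace A] (u : ℕ → A) : Set (ℕ → A) :=
  closure {y | ∃ n, y = shift^[n] u}

/-- `δ(x)`: the length of the maximal prefix of `x` belonging to the language of `u`. -/
noncomputable def delta (u x : ℕ → A) : ℕ := sSup {n | prefixWord x n ∈ Lang u}

/-- The renormalization operator `R`. -/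
noncomputable def renorm (H : A → List A) (V : (ℕ → A) → ℝ) : (ℕ → A) → ℝ :=
  fun x => ∑ i ∈ Finset.range (H (x 0)).length, V (shift^[i] (substSeq H x))

/-- `t_n(x) = |H^n(x₀)|`. -/
def tlen (H : A → List A) (n : ℕ) (x : ℕ → A) : ℕ := ((wordMap H)^[n] [x 0]).length

/-- An accident occurs at time `b`. -/
def AccidentAt (u x : ℕ → A) (b : ℕ) : Prop :=
  0 < b ∧ delta u x - b < delta u (shift^[b] x) ∧
    ∀ i < b, delta u (shift^[i] x) = delta u x - i

/-- The first accident time of `x` (junk value `0` if there is none). -/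
noncomputable def firstAccident (u x : ℕ → A) : ℕ := sInf {b | AccidentAt u x b}

/-- The `j`-th accident time `B_j` of `x`, defined inductively. -/
noncomputable def accidentTime (u x : ℕ → A) : ℕ → ℕ
  | 0 => 0
  | j + 1 => accidentTime u x j + firstAccident u (shift^[accidentTime u x j] x)

/-- The set of (genuine) accident times of `x`. -/
def AccidentSet (u x : ℕ → A) : Set ℕ :=
  {B | ∃ j : ℕ, B = accidentTime u x (j + 1) ∧
        AccidentAt u (shift^[accidentTime u x j] x)
          (firstAccident u (shift^[accidentTime u x j] x))}

/-- A word is right special. -/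
def RightSpecial (u : ℕ → A) (w : List A) : Prop :=
  ∃ b c : A, b ≠ c ∧ w ++ [b] ∈ Lang u ∧ w ++ [c] ∈ Lang u

/-- A word is left special. -/
def LeftSpecial (u : ℕ → A) (w : List A) : Prop :=
  ∃ a b : A, a ≠ b ∧ a :: w ∈ Lang u ∧ b :: w ∈ Lang u

/-- A word is bispecial. -/
def Bispecial (u : ℕ → A) (w : List A) : Prop := RightSpecial u w ∧ LeftSpecial u w

/-- `l` is a recognizability constant for `H`: every long enough word of the language
admits a unique desubstitution. -/
def RecogBound (H : A → List A) (u : ℕ → A) (l : ℕ) : Prop :=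
  ∀ z ∈ Lang u, l < z.length →
    ∃! d : List A × List A × List A,
      ∃ s p : A,
        z = d.1 ++ wordMap H d.2.1 ++ d.2.2 ∧
        d.2.1 ∈ Lang u ∧
        d.1 <:+ H s ∧ d.1.length < (H s).length ∧
        d.2.2 <+: H p ∧ d.2.2.length < (H p).length ∧
        ([s] ++ d.2.1 ++ [p]) ∈ Lang u

/-- The incidence matrix of a substitution, with real entries. -/
def incMat [Fintype A] [DecidableEq A] (H : A → List A) : Matrix A A ℝ :=
  fun a b => ((H a).count b : ℝ)

/-- `lam` is the Perron–Frobenius eigenvalue of the incidence matrix of the (primitive)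
substitution `H`: it admits an entrywise positive eigenvector. -/
def IsPerronValue [Fintype A] [DecidableEq A] (H : A → List A) (lam : ℝ) : Prop :=
  ∃ v : A → ℝ, (∀ a, 0 < v a) ∧ (incMat H).mulVec v = lam • v

/-- Concatenation of a finite word with an infinite word. -/
def catWord (S : List A) (y : ℕ → A) : ℕ → A :=
  fun n => S.getD n (y (n - S.length))

/-!
`R^m V(z)` is a Birkhoff sum of `V` along `H^m(z₀)`. As `H` is marked and aperiodic, it is
recognizable, so the maximal legal prefix of `z` is carried by `H^m` exactly onto that of `H^m(z)`,
as soon as short factors of all iterates of `z` are legal; by 2-fullness this is so for every shift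
of `H^N(x)`, where `N` depends on `H` only, and `R^(N+m) V(x)` is a finite sum over such points.
There the `k`-th term of the Birkhoff sum is `G(σ^k H^m(z)) / (L - k)^α` with
`L = |H^m(z₀ ⋯ z_{δ(z)-1})|`. Writing `p = |H^m(z₀)|` for the number of terms, `L / p` converges
to some `ρ > 1`, because letter frequencies are uniform. Hence the sum has order `p^(1-α)`, and for
`α = 1` summation by parts and unique ergodicity replace `G` by its mean, leaving a difference of
harmonic numbers with limit `log (ρ / (ρ - 1))`. This quantity tends to `0` as `δ(z) → ∞`, which
gives the continuity of `U` at the points of `K`.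
-/

section Words

theorem shift_iterate_apply (x : ℕ → A) (i n : ℕ) : shift^[i] x n = x (i + n) := by
  induction i generalizing n with
  | zero => simp
  | succ i ih => rw [Function.iterate_succ_apply', shift, ih, add_right_comm, add_assoc]

theorem length_prefixWord (x : ℕ → A) (n : ℕ) : (prefixWord x n).length = n := by
  simp [prefixWord]

theorem prefixWord_one (x : ℕ → A) : prefixWord x 1 = [x 0] := by simp [prefixWord]

theorem prefixWord_add (x : ℕ → A) (m n : ℕ) :
    prefixWord x (m + n) = prefixWord x m ++ prefixWord (shift^[m] x) n := by
  simp [prefixWord, List.range_add, shift_iterate_apply]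

theorem prefixWord_succ (x : ℕ → A) (n : ℕ) : prefixWord x (n + 1) = prefixWord x n ++ [x n] := by
  rw [prefixWord_add, prefixWord_one, shift_iterate_apply, add_zero]

theorem prefixWord_eq_iff {x y : ℕ → A} {n : ℕ} :
    prefixWord x n = prefixWord y n ↔ ∀ i < n, x i = y i := by
  simp [prefixWord]

theorem eq_of_frequently_prefixWord_eq {x y : ℕ → A}
    (h : ∀ n, ∃ m ≥ n, prefixWord x m = prefixWord y m) : x = y := by
  funext n
  obtain ⟨m, hm, hxy⟩ := h (n + 1)
  exact prefixWord_eq_iff.1 hxy n hm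

theorem wordMap_append (H : A → List A) (v w : List A) :
    wordMap H (v ++ w) = wordMap H v ++ wordMap H w :=
  List.flatMap_append

theorem wordMap_singleton (H : A → List A) (a : A) : wordMap H [a] = H a :=
  List.flatMap_singleton H a

theorem wordMap_comp (G H : A → List A) (w : List A) :
    wordMap (wordMap G ∘ H) w = wordMap G (wordMap H w) :=
  List.flatMap_assoc.symm

end Words

section Blocks

/-- The position in `H(x) = H(x₀)H(x₁)⋯` at which the block `H(x_k)` begins, that is
`|H(x₀ ⋯ x_{k-1})|`. -/
def blockStart (H : A → List A) (x : ℕ → A) (k : ℕ) : ℕ :=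
  ∑ i ∈ Finset.range k, (H (x i)).length

theorem blockStart_zero (H : A → List A) (x : ℕ → A) : blockStart H x 0 = 0 := rfl

theorem blockStart_succ (H : A → List A) (x : ℕ → A) (k : ℕ) :
    blockStart H x (k + 1) = blockStart H x k + (H (x k)).length :=
  Finset.sum_range_succ _ _

theorem blockStart_one (H : A → List A) (x : ℕ → A) : blockStart H x 1 = (H (x 0)).length :=
  Finset.sum_range_one _

theorem blockStart_add (H : A → List A) (x : ℕ → A) (i j : ℕ) :
    blockStart H x (i + j) = blockStart H x i + blockStart H (shift^[i] x) j := by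
  simp only [blockStart, Finset.sum_range_add, shift_iterate_apply]

theorem blockStart_monotone (H : A → List A) (x : ℕ → A) : Monotone (blockStart H x) :=
  monotone_nat_of_le_succ fun k => (blockStart_succ H x k).symm ▸ Nat.le_add_right _ _

theorem blockStart_strictMono {H : A → List A} (hne : ∀ a, H a ≠ []) (x : ℕ → A) :
    StrictMono (blockStart H x) :=
  strictMono_nat_of_lt_succ fun k => by
    rw [blockStart_succ]
    exact Nat.lt_add_of_pos_right (List.length_pos_iff.2 (hne _))

theorem le_blockStart {H : A → List A} (hne : ∀ a, H a ≠ []) (x : ℕ → A) (k : ℕ) :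
    k ≤ blockStart H x k :=
  (blockStart_strictMono hne x).le_apply

/-- The index `k` of the block `H(x_k)` of `H(x)` that contains position `q`. -/
def blockIndex (H : A → List A) (x : ℕ → A) (q : ℕ) : ℕ :=
  Nat.findGreatest (fun k => blockStart H x k ≤ q) q

theorem blockStart_blockIndex_le (H : A → List A) (x : ℕ → A) (q : ℕ) :
    blockStart H x (blockIndex H x q) ≤ q :=
  Nat.findGreatest_spec (P := fun k => blockStart H x k ≤ q) (Nat.zero_le q)
    ((blockStart_zero H x).trans_le (Nat.zero_le q))

theorem lt_blockStart_blockIndex_add_one {H : A → List A} (hne : ∀ a, H a ≠ []) (x : ℕ → A)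
    (q : ℕ) : q < blockStart H x (blockIndex H x q + 1) := by
  by_contra! h
  have hk : blockIndex H x q + 1 ≤ blockIndex H x q :=
    Nat.le_findGreatest ((le_blockStart hne x _).trans h) h
  omega

theorem exists_eq_blockStart_add {H : A → List A} (hne : ∀ a, H a ≠ []) (x : ℕ → A) (q : ℕ) :
    ∃ k r, q = blockStart H x k + r ∧ r < (H (x k)).length := by
  obtain ⟨r, hr⟩ := Nat.exists_eq_add_of_le (blockStart_blockIndex_le H x q)
  have hlt := lt_blockStart_blockIndex_add_one hne x q
  rw [blockStart_succ] at hlt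
  exact ⟨_, r, hr, by omega⟩

theorem blockIndex_blockStart_add {H : A → List A} (hne : ∀ a, H a ≠ []) (x : ℕ → A) {k r : ℕ}
    (hr : r < (H (x k)).length) : blockIndex H x (blockStart H x k + r) = k := by
  have hmono := blockStart_strictMono hne x
  have hle := blockStart_blockIndex_le H x (blockStart H x k + r)
  have hlt := lt_blockStart_blockIndex_add_one hne x (blockStart H x k + r)
  have hsucc := blockStart_succ H x k
  have h₁ := hmono.lt_iff_lt.1 ((Nat.le_add_right _ r).trans_lt hlt)
  have h₂ : blockIndex H x (blockStart H x k + r) < k + 1 :=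
    hmono.lt_iff_lt.1 (hle.trans_lt (by omega))
  omega

theorem length_wordMap_prefixWord (H : A → List A) (x : ℕ → A) (k : ℕ) :
    (wordMap H (prefixWord x k)).length = blockStart H x k := by
  induction k with
  | zero => rfl
  | succ k ih =>
    rw [prefixWord_succ, wordMap_append, wordMap_singleton, List.length_append, ih,
      blockStart_succ]

theorem blockStart_congr (H : A → List A) {x y : ℕ → A} {n : ℕ} (h : ∀ i < n, x i = y i) :
    blockStart H x n = blockStart H y n := by
  rw [← length_wordMap_prefixWord, ← length_wordMap_prefixWord, prefixWord_eq_iff.2 h]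

theorem wordMap_prefixWord_prefix (H : A → List A) (x : ℕ → A) {i j : ℕ} (hij : i ≤ j) :
    wordMap H (prefixWord x i) <+: wordMap H (prefixWord x j) := by
  obtain ⟨d, rfl⟩ := Nat.exists_eq_add_of_le hij
  rw [prefixWord_add, wordMap_append]
  exact List.prefix_append _ _

theorem substSeq_eq_getElem {H : A → List A} (hne : ∀ a, H a ≠ []) (x : ℕ → A) {k n : ℕ}
    (hn : n < (wordMap H (prefixWord x k)).length) :
    substSeq H x n = (wordMap H (prefixWord x k))[n] := by
  have hn' : n < (wordMap H (prefixWord x (n + 1))).length := by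
    rw [length_wordMap_prefixWord]
    exact le_blockStart hne x (n + 1)
  calc substSeq H x n = (wordMap H (prefixWord x (n + 1)))[n] :=
        List.getD_eq_getElem _ _ hn'
    _ = (wordMap H (prefixWord x k))[n] := by
        rcases le_total (n + 1) k with h | h
        · exact (wordMap_prefixWord_prefix H x h).getElem hn'
        · exact ((wordMap_prefixWord_prefix H x h).getElem hn).symm

theorem prefixWord_substSeq {H : A → List A} (hne : ∀ a, H a ≠ []) (x : ℕ → A) (k : ℕ) :
    prefixWord (substSeq H x) (blockStart H x k) = wordMap H (prefixWord x k) := by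
  refine List.ext_getElem (by rw [length_prefixWord, length_wordMap_prefixWord]) fun n _ hn => ?_
  rw [← substSeq_eq_getElem hne x hn]
  simp [prefixWord]

theorem substSeq_congr {H : A → List A} (hne : ∀ a, H a ≠ []) {x y : ℕ → A} {n q : ℕ}
    (h : ∀ i < n, x i = y i) (hq : q < blockStart H x n) : substSeq H x q = substSeq H y q := by
  refine prefixWord_eq_iff.1 ?_ q hq
  rw [prefixWord_substSeq hne, blockStart_congr H h, prefixWord_substSeq hne,
    prefixWord_eq_iff.2 h]

theorem shift_blockStart_substSeq {H : A → List A} (hne : ∀ a, H a ≠ []) (x : ℕ → A) (k : ℕ) :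
    shift^[blockStart H x k] (substSeq H x) = substSeq H (shift^[k] x) := by
  refine eq_of_frequently_prefixWord_eq fun n => ⟨_, le_blockStart hne (shift^[k] x) n, ?_⟩
  have h := prefixWord_substSeq hne x (k + n)
  rw [blockStart_add, prefixWord_add, prefixWord_add x, wordMap_append,
    prefixWord_substSeq hne] at h
  rw [List.append_cancel_left h, prefixWord_substSeq hne]

theorem substSeq_blockStart_add {H : A → List A} (hne : ∀ a, H a ≠ []) (x : ℕ → A) {k r : ℕ}
    (hr : r < (H (x k)).length) : substSeq H x (blockStart H x k + r) = (H (x k))[r] := by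
  rw [← shift_iterate_apply (substSeq H x), shift_blockStart_substSeq hne,
    substSeq_eq_getElem (k := 1) hne _ (by simpa [prefixWord_one, wordMap_singleton,
      shift_iterate_apply])]
  simp [prefixWord_one, wordMap_singleton, shift_iterate_apply]

theorem wordMap_comp_ne_nil {G H : A → List A} (hG : ∀ a, G a ≠ []) (hH : ∀ a, H a ≠ []) (a : A) :
    (wordMap G ∘ H) a ≠ [] := by
  obtain ⟨b, w, hbw⟩ := List.exists_cons_of_ne_nil (hH a)
  simp [wordMap, hbw, hG b]

theorem blockStart_comp (G : A → List A) {H : A → List A} (hH : ∀ a, H a ≠ []) (x : ℕ → A)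
    (k : ℕ) :
    blockStart (wordMap G ∘ H) x k = blockStart G (substSeq H x) (blockStart H x k) := by
  rw [← length_wordMap_prefixWord, wordMap_comp, ← prefixWord_substSeq hH,
    length_wordMap_prefixWord]

theorem substSeq_comp {G H : A → List A} (hG : ∀ a, G a ≠ []) (hH : ∀ a, H a ≠ []) (x : ℕ → A) :
    substSeq (wordMap G ∘ H) x = substSeq G (substSeq H x) := by
  have hGH := wordMap_comp_ne_nil hG hH
  refine eq_of_frequently_prefixWord_eq fun n => ⟨_, le_blockStart hGH x n, ?_⟩
  rw [prefixWord_substSeq hGH, wordMap_comp, ← prefixWord_substSeq hH,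
    ← prefixWord_substSeq hG, ← blockStart_comp G hH]

theorem blockStart_le_mul {H : A → List A} {M : ℕ} (hM : ∀ a, (H a).length ≤ M) (x : ℕ → A)
    (k : ℕ) : blockStart H x k ≤ k * M := by
  simpa [blockStart] using
    Finset.sum_le_card_nsmul (Finset.range k) (fun i => (H (x i)).length) M fun i _ => hM _

theorem mul_le_blockStart {H : A → List A} {M : ℕ} (hM : ∀ a, M ≤ (H a).length) (x : ℕ → A)
    (k : ℕ) : k * M ≤ blockStart H x k := by
  simpa [blockStart] using
    Finset.card_nsmul_le_sum (Finset.range k) (fun i => (H (x i)).length) M fun i _ => hM _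

end Blocks

section Powers

/-- The `m`-th power `H^m` of a substitution, as a substitution. -/
def substPow (H : A → List A) (m : ℕ) : A → List A := fun a => (wordMap H)^[m] [a]

theorem substPow_zero (H : A → List A) : substPow H 0 = fun a => [a] := rfl

theorem wordMap_substPow (H : A → List A) (m : ℕ) (w : List A) :
    wordMap (substPow H m) w = (wordMap H)^[m] w := by
  induction m generalizing w with
  | zero => simp [wordMap, substPow_zero]
  | succ m ih =>
    have hcomp : substPow H (m + 1) = wordMap H ∘ substPow H m :=
      funext fun a => Function.iterate_succ_apply' _ _ _
    rw [hcomp, wordMap_comp, ih, Function.iterate_succ_apply']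

theorem substPow_one (H : A → List A) : substPow H 1 = H := funext fun a => wordMap_singleton H a

theorem substPow_add (H : A → List A) (m k : ℕ) :
    substPow H (m + k) = wordMap (substPow H m) ∘ substPow H k := by
  funext a
  rw [Function.comp_apply, wordMap_substPow]
  exact Function.iterate_add_apply _ _ _ _

theorem substPow_ne_nil {H : A → List A} (hne : ∀ a, H a ≠ []) (m : ℕ) (a : A) :
    substPow H m a ≠ [] := by
  induction m generalizing a with
  | zero => exact List.cons_ne_nil _ _
  | succ m ih =>
    rw [substPow_add, substPow_one]
    exact wordMap_comp_ne_nil ih hne a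

theorem substSeq_singleton (x : ℕ → A) : substSeq (fun a => [a]) x = x := by
  funext n
  have h : blockStart (fun a => [a]) x n = n := by simp [blockStart]
  simpa [h] using substSeq_blockStart_add (H := fun a => [a]) (fun _ => List.cons_ne_nil _ _) x
    (k := n) (r := 0) Nat.one_pos

theorem substSeq_substPow {H : A → List A} (hne : ∀ a, H a ≠ []) (m : ℕ) :
    substSeq (substPow H m) = (substSeq H)^[m] := by
  funext x
  induction m generalizing x with
  | zero => exact substSeq_singleton x
  | succ m ih =>
    rw [substPow_add, substPow_one, substSeq_comp (substPow_ne_nil hne m) hne, ih,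
      Function.iterate_succ_apply]

theorem blockStart_substPow_zero (H : A → List A) (x : ℕ → A) (k : ℕ) :
    blockStart (substPow H 0) x k = k := by
  simp [blockStart, substPow_zero]

theorem blockStart_substPow_add {H : A → List A} (hne : ∀ a, H a ≠ []) (m k : ℕ) (x : ℕ → A)
    (j : ℕ) :
    blockStart (substPow H (m + k)) x j =
      blockStart (substPow H m) ((substSeq H)^[k] x) (blockStart (substPow H k) x j) := by
  rw [substPow_add, blockStart_comp _ (substPow_ne_nil hne k), substSeq_substPow hne]

theorem shift_blockStart_iterate {H : A → List A} (hne : ∀ a, H a ≠ []) (m : ℕ) (x : ℕ → A)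
    (k : ℕ) :
    shift^[blockStart (substPow H m) x k] ((substSeq H)^[m] x) =
      (substSeq H)^[m] (shift^[k] x) := by
  rw [← substSeq_substPow hne, shift_blockStart_substSeq (substPow_ne_nil hne m)]

theorem length_substPow_monotone {H : A → List A} (hne : ∀ a, H a ≠ []) (a : A) :
    Monotone fun m => (substPow H m a).length :=
  monotone_nat_of_le_succ fun m => by
    have h := blockStart_comp H (substPow_ne_nil hne m) (fun _ => a) 1
    rw [blockStart_one, blockStart_one] at h
    rw [add_comm, substPow_add, substPow_one, h]
    exact le_blockStart hne _ _

end Powers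

section Renormalization

theorem birkhoffSum_blockStart {X M : Type*} [AddCommMonoid M] (T : X → X) (f : X → M)
    (H : A → List A) (x : ℕ → A) (y : X) (n : ℕ) :
    birkhoffSum T f (blockStart H x n) y =
      ∑ i ∈ Finset.range n, birkhoffSum T f (H (x i)).length (T^[blockStart H x i] y) := by
  induction n with
  | zero => rfl
  | succ n ih => rw [blockStart_succ, birkhoffSum_add, ih, Finset.sum_range_succ]

theorem renorm_comp {G H : A → List A} (hG : ∀ a, G a ≠ []) (hH : ∀ a, H a ≠ [])
    (V : (ℕ → A) → ℝ) : renorm (wordMap G ∘ H) V = renorm H (renorm G V) := by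
  funext x
  have h := birkhoffSum_blockStart shift V G (substSeq H x) (substSeq G (substSeq H x))
    (H (x 0)).length
  rw [← blockStart_one, ← blockStart_comp G hH, blockStart_one, ← substSeq_comp hG hH,
    blockStart_one] at h
  refine h.trans (Finset.sum_congr rfl fun i _ => ?_)
  rw [substSeq_comp hG hH, shift_blockStart_substSeq hG]
  simp only [renorm, birkhoffSum, shift_iterate_apply, add_zero]

theorem renorm_substPow {H : A → List A} (hne : ∀ a, H a ≠ []) (m : ℕ) :
    renorm (substPow H m) = (renorm H)^[m] := by
  funext V
  induction m generalizing V with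
  | zero =>
    funext x
    simp [renorm, substPow_zero, substSeq_singleton]
  | succ m ih =>
    rw [substPow_add, substPow_one, renorm_comp (substPow_ne_nil hne m) hne, ih,
      Function.iterate_succ_apply']

theorem renorm_iterate_apply {H : A → List A} (hne : ∀ a, H a ≠ []) (V : (ℕ → A) → ℝ) (m : ℕ)
    (x : ℕ → A) :
    (renorm H)^[m] V x =
      birkhoffSum shift V (substPow H m (x 0)).length ((substSeq H)^[m] x) := by
  rw [← renorm_substPow hne, ← substSeq_substPow hne]
  rfl

end Renormalization

section Language

theorem factorAt_eq (x : ℕ → A) (i n : ℕ) : factorAt x i n = prefixWord (shift^[i] x) n := by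
  simp [factorAt, prefixWord, shift_iterate_apply]

theorem prefixWord_mem_Lang_iff {u x : ℕ → A} {n : ℕ} :
    prefixWord x n ∈ Lang u ↔ ∃ p, ∀ i < n, x i = u (p + i) := by
  simp only [Lang, Set.mem_ofPred_eq, length_prefixWord, factorAt_eq, prefixWord_eq_iff,
    shift_iterate_apply]

theorem prefixWord_mem_Lang_of_le {u x : ℕ → A} {m n : ℕ} (h : prefixWord x n ∈ Lang u)
    (hmn : m ≤ n) : prefixWord x m ∈ Lang u := by
  obtain ⟨p, hp⟩ := prefixWord_mem_Lang_iff.1 h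
  exact prefixWord_mem_Lang_iff.2 ⟨p, fun i hi => hp i (hi.trans_le hmn)⟩

theorem prefixWord_shift_mem_Lang {u x : ℕ → A} {k n : ℕ} (h : prefixWord x (k + n) ∈ Lang u) :
    prefixWord (shift^[k] x) n ∈ Lang u := by
  obtain ⟨p, hp⟩ := prefixWord_mem_Lang_iff.1 h
  refine prefixWord_mem_Lang_iff.2 ⟨p + k, fun i hi => ?_⟩
  rw [shift_iterate_apply, hp _ (by omega), add_assoc]

theorem IsFixedPointSubst.iterate_eq {H : A → List A} {u : ℕ → A} (hu : IsFixedPointSubst H u)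
    (m : ℕ) : (substSeq H)^[m] u = u :=
  Function.iterate_fixed hu m

theorem IsFixedPointSubst.substPow {H : A → List A} (hne : ∀ a, H a ≠ []) {u : ℕ → A}
    (hu : IsFixedPointSubst H u) (m : ℕ) : IsFixedPointSubst (substPow H m) u := by
  rw [IsFixedPointSubst, substSeq_substPow hne, hu.iterate_eq]

theorem prefixWord_substSeq_mem_Lang {H : A → List A} (hne : ∀ a, H a ≠ []) {u : ℕ → A}
    (hu : IsFixedPointSubst H u) {x : ℕ → A} {n : ℕ} (h : prefixWord x n ∈ Lang u) :
    prefixWord (substSeq H x) (blockStart H x n) ∈ Lang u := by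
  obtain ⟨p, hp⟩ := prefixWord_mem_Lang_iff.1 h
  refine prefixWord_mem_Lang_iff.2 ⟨blockStart H u p, fun i hi => ?_⟩
  have hxu : ∀ i < n, x i = (shift^[p] u) i := fun i hi => by rw [shift_iterate_apply, hp i hi]
  rw [substSeq_congr hne hxu hi, ← shift_blockStart_substSeq hne, shift_iterate_apply, hu]

theorem prefixWord_iterate_mem_Lang {H : A → List A} (hne : ∀ a, H a ≠ []) {u : ℕ → A}
    (hu : IsFixedPointSubst H u) {x : ℕ → A} {n : ℕ} (h : prefixWord x n ∈ Lang u) (m : ℕ) :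
    prefixWord ((substSeq H)^[m] x) (blockStart (substPow H m) x n) ∈ Lang u := by
  rw [← substSeq_substPow hne]
  exact prefixWord_substSeq_mem_Lang (substPow_ne_nil hne m) (hu.substPow hne m) h

end Language

section Primitivity

theorem exists_length_le [Finite A] (H : A → List A) : ∃ M, ∀ a, (H a).length ≤ M := by
  obtain ⟨M, hM⟩ := (Set.finite_range fun a => (H a).length).bddAbove
  exact ⟨M, fun a => hM ⟨a, rfl⟩⟩

theorem length_substPow_add {H : A → List A} (hne : ∀ a, H a ≠ []) (m k : ℕ) (x : ℕ → A) :
    (substPow H (m + k) (x 0)).length =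
      blockStart (substPow H m) ((substSeq H)^[k] x) (substPow H k (x 0)).length := by
  rw [← blockStart_one, blockStart_substPow_add hne, blockStart_one]

theorem exists_substSeq_eq_of_mem {H : A → List A} (hne : ∀ a, H a ≠ []) {x : ℕ → A} {b : A}
    (hb : b ∈ H (x 0)) : ∃ q < (H (x 0)).length, substSeq H x q = b := by
  obtain ⟨q, hq, rfl⟩ := List.getElem_of_mem hb
  have h := substSeq_blockStart_add hne x hq
  rw [blockStart_zero, zero_add] at h
  exact ⟨q, hq, h⟩

theorem length_substPow_le_of_forall_mem {H : A → List A} (hne : ∀ a, H a ≠ []) {k : ℕ}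
    (hk : ∀ a b : A, b ∈ substPow H k a) (m : ℕ) (a b : A) :
    (substPow H m b).length ≤ (substPow H (m + k) a).length := by
  obtain ⟨q, hq, rfl⟩ :=
    exists_substSeq_eq_of_mem (substPow_ne_nil hne k) (x := fun _ => a) (hk a b)
  have hsucc := blockStart_succ (substPow H m) ((substSeq H)^[k] fun _ => a) q
  have hmono := blockStart_monotone (substPow H m) ((substSeq H)^[k] fun _ => a)
    (Nat.succ_le_of_lt hq)
  rw [length_substPow_add hne m k fun _ => a, substSeq_substPow hne]
  rw [Nat.succ_eq_add_one] at hmono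
  omega

theorem two_pow_le_length_substPow {H : A → List A} (hne : ∀ a, H a ≠ []) {k : ℕ}
    (hk : ∀ a, 2 ≤ (substPow H k a).length) (n : ℕ) (a : A) :
    2 ^ n ≤ (substPow H (k * n) a).length := by
  induction n generalizing a with
  | zero => exact List.length_pos_iff.2 (substPow_ne_nil hne _ a)
  | succ n ih =>
    calc 2 ^ (n + 1) = 2 * 2 ^ n := pow_succ' 2 n
      _ ≤ (substPow H k a).length * 2 ^ n := Nat.mul_le_mul_right _ (hk a)
      _ ≤ (substPow H (k * n + k) a).length :=
        (mul_le_blockStart ih _ _).trans_eq (length_substPow_add hne _ _ fun _ => a).symm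

theorem PrimitiveSubst.exists_forall_le_length [Nontrivial A] {H : A → List A}
    (hne : ∀ a, H a ≠ []) (hprim : PrimitiveSubst H) (n : ℕ) :
    ∃ N, ∀ m ≥ N, ∀ a, n ≤ (substPow H m a).length := by
  obtain ⟨k, -, hk⟩ := hprim
  obtain ⟨b, c, hbc⟩ := exists_pair_ne A
  have htwo : ∀ a, 2 ≤ (substPow H k a).length := fun a => by
    by_contra! hlt
    obtain ⟨d, hd⟩ := List.length_eq_one_iff.1
      (Nat.le_antisymm (Nat.lt_succ_iff.1 hlt) (List.length_pos_iff.2 (substPow_ne_nil hne k a)))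
    have hmem : ∀ e, e = d := fun e => List.mem_singleton.1 (hd ▸ hk a e)
    exact hbc ((hmem b).trans (hmem c).symm)
  refine ⟨k * n, fun m hm a => ?_⟩
  calc n ≤ 2 ^ n := Nat.lt_two_pow_self.le
    _ ≤ (substPow H (k * n) a).length := two_pow_le_length_substPow hne htwo n a
    _ ≤ (substPow H m a).length := length_substPow_monotone hne a hm

theorem PrimitiveSubst.tendsto_length_substPow [Nontrivial A] {H : A → List A}
    (hne : ∀ a, H a ≠ []) (hprim : PrimitiveSubst H) (a : A) :
    Tendsto (fun m => (substPow H m a).length) atTop atTop :=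
  tendsto_atTop_atTop.2 fun n =>
    (hprim.exists_forall_le_length hne n).imp fun _ hN m hm => hN m hm a

theorem PrimitiveSubst.exists_letter_recurrence [Finite A] {H : A → List A} (hne : ∀ a, H a ≠ [])
    (hprim : PrimitiveSubst H) {u : ℕ → A} (hu : IsFixedPointSubst H u) :
    ∃ R, ∀ p a, ∃ s ≤ R, u (p + s) = a := by
  obtain ⟨k, -, hk⟩ := hprim
  obtain ⟨M, hM⟩ := exists_length_le (substPow H k)
  refine ⟨2 * M, fun p a => ?_⟩
  have hnek := substPow_ne_nil hne k
  obtain ⟨b, r, rfl, hr⟩ := exists_eq_blockStart_add hnek u p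
  obtain ⟨q, hq, hqa⟩ := exists_substSeq_eq_of_mem hnek (x := shift^[b + 1] u) (hk _ a)
  rw [← shift_blockStart_substSeq hnek, hu.substPow hne k, shift_iterate_apply,
    blockStart_succ] at hqa
  have hb := hM (u b)
  have hb' := hM ((shift^[b + 1] u) 0)
  refine ⟨(substPow H k (u b)).length - r + q, by omega, ?_⟩
  rw [← hqa]
  congr 1
  omega

theorem PrimitiveSubst.exists_prefix_recurrence [Finite A] [Nontrivial A] {H : A → List A}
    (hne : ∀ a, H a ≠ []) (hprim : PrimitiveSubst H) {u : ℕ → A} (hu : IsFixedPointSubst H u)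
    (n : ℕ) : ∃ R, ∀ p, ∃ s ≤ R, prefixWord (shift^[p + s] u) n = prefixWord u n := by
  obtain ⟨r, hr⟩ := hprim.exists_forall_le_length hne n
  obtain ⟨R, hR⟩ := hprim.exists_letter_recurrence hne hu
  obtain ⟨M, hM⟩ := exists_length_le (substPow H r)
  have hner := substPow_ne_nil hne r
  refine ⟨(R + 1) * M, fun p => ?_⟩
  obtain ⟨b, w, rfl, hw⟩ := exists_eq_blockStart_add hner u p
  obtain ⟨s, hs, hsu⟩ := hR (b + 1) (u 0)
  have hle : blockStart (substPow H r) (shift^[b] u) (1 + s) ≤ (R + 1) * M :=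
    (blockStart_le_mul hM _ _).trans (Nat.mul_le_mul_right _ (by omega))
  have hadd := blockStart_add (substPow H r) u b (1 + s)
  have hlt := blockStart_monotone (substPow H r) u (Nat.le_add_right (b + 1) s)
  rw [blockStart_succ, add_assoc] at hlt
  refine ⟨blockStart (substPow H r) u (b + (1 + s)) - (blockStart (substPow H r) u b + w),
    by omega, ?_⟩
  rw [show blockStart (substPow H r) u b + w + (blockStart (substPow H r) u (b + (1 + s)) -
    (blockStart (substPow H r) u b + w)) = blockStart (substPow H r) u (b + (1 + s)) by omega]
  refine prefixWord_eq_iff.2 fun i hi => ?_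
  have hfix := hu.substPow hne r
  have hshift := shift_blockStart_substSeq hner u (b + (1 + s))
  have hzero : ∀ i < 1, (shift^[b + (1 + s)] u) i = u i := fun i hi => by
    rw [Nat.lt_one_iff.1 hi, shift_iterate_apply, add_zero, ← add_assoc, hsu]
  rw [hfix] at hshift
  rw [hshift, substSeq_congr hner hzero, hfix]
  rw [blockStart_one]
  exact hi.trans_le (hr r le_rfl _)

end Primitivity

section Recognizability

theorem MarkedSubst.eq_of_getElem_zero_eq {H : A → List A} {hne : ∀ a, H a ≠ []}
    (hmark : MarkedSubst H hne) {a b : A}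
    (h : (H a)[0]'(List.length_pos_iff.2 (hne a)) = (H b)[0]'(List.length_pos_iff.2 (hne b))) :
    a = b :=
  hmark.1 (by simpa only [List.head_eq_getElem] using h)

theorem MarkedSubst.eq_of_getElem_last_eq {H : A → List A} {hne : ∀ a, H a ≠ []}
    (hmark : MarkedSubst H hne) {a b : A} {i j : ℕ} (hi : i + 1 = (H a).length)
    (hj : j + 1 = (H b).length) (h : (H a)[i] = (H b)[j]) : a = b := by
  refine hmark.2 ?_
  simp only [List.getLast_eq_getElem, ← hi, ← hj, Nat.add_sub_cancel, h]

/-- The parsing state of `H(x)` at position `q`: the pair `(a, r)` such that position `q` of `H(x)`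
is occupied by the `r`-th letter of a block `H(a)`. -/
def parse (H : A → List A) (x : ℕ → A) (q : ℕ) : A × ℕ :=
  (x (blockIndex H x q), q - blockStart H x (blockIndex H x q))

theorem parse_blockStart_add {H : A → List A} (hne : ∀ a, H a ≠ []) (x : ℕ → A) {k r : ℕ}
    (hr : r < (H (x k)).length) : parse H x (blockStart H x k + r) = (x k, r) := by
  rw [parse, blockIndex_blockStart_add hne x hr, Nat.add_sub_cancel_left]

theorem parse_snd_lt {H : A → List A} (hne : ∀ a, H a ≠ []) (x : ℕ → A) (q : ℕ) :
    (parse H x q).2 < (H (parse H x q).1).length := by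
  obtain ⟨k, r, rfl, hr⟩ := exists_eq_blockStart_add hne x q
  rwa [parse_blockStart_add hne x hr]

theorem parse_snd_eq_zero_iff {H : A → List A} (hne : ∀ a, H a ≠ []) {x : ℕ → A} {q : ℕ} :
    (parse H x q).2 = 0 ↔ q ∈ Set.range (blockStart H x) := by
  constructor
  · intro h
    exact ⟨blockIndex H x q,
      (blockStart_blockIndex_le H x q).antisymm (Nat.le_of_sub_eq_zero h)⟩
  · rintro ⟨k, rfl⟩
    exact congrArg Prod.snd (parse_blockStart_add hne x (List.length_pos_iff.2 (hne (x k))))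

theorem substSeq_eq_getElem_parse {H : A → List A} (hne : ∀ a, H a ≠ []) (x : ℕ → A) (q : ℕ) :
    substSeq H x q = (H (parse H x q).1)[(parse H x q).2]'(parse_snd_lt hne x q) := by
  obtain ⟨k, r, rfl, hr⟩ := exists_eq_blockStart_add hne x q
  simp only [parse_blockStart_add hne x hr, substSeq_blockStart_add hne x hr]

theorem substSeq_eq_of_parse_eq {H : A → List A} (hne : ∀ a, H a ≠ []) {x y : ℕ → A} {p q : ℕ}
    (h : parse H x p = parse H y q) : substSeq H x p = substSeq H y q := by
  simp only [substSeq_eq_getElem_parse hne, h]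

theorem parse_add_one_of_lt {H : A → List A} (hne : ∀ a, H a ≠ []) {x : ℕ → A} {q : ℕ}
    (h : (parse H x q).2 + 1 < (H (parse H x q).1).length) :
    parse H x (q + 1) = ((parse H x q).1, (parse H x q).2 + 1) := by
  obtain ⟨k, r, rfl, hr⟩ := exists_eq_blockStart_add hne x q
  rw [parse_blockStart_add hne x hr] at h ⊢
  rw [add_assoc, parse_blockStart_add hne x h]

theorem parse_add_one_snd_eq_zero {H : A → List A} (hne : ∀ a, H a ≠ []) {x : ℕ → A} {q : ℕ}
    (h : (parse H x q).2 + 1 = (H (parse H x q).1).length) : (parse H x (q + 1)).2 = 0 := by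
  obtain ⟨k, r, rfl, hr⟩ := exists_eq_blockStart_add hne x q
  rw [parse_blockStart_add hne x hr] at h
  exact (parse_snd_eq_zero_iff hne).2 ⟨k + 1, by rw [blockStart_succ, ← h, add_assoc]⟩

theorem parse_eq_of_snd_eq_zero {H : A → List A} {hne : ∀ a, H a ≠ []} (hmark : MarkedSubst H hne)
    {x y : ℕ → A} {p q : ℕ} (hp : (parse H x p).2 = 0) (hq : (parse H y q).2 = 0)
    (h : substSeq H x p = substSeq H y q) : parse H x p = parse H y q := by
  refine Prod.ext (hmark.eq_of_getElem_zero_eq ?_) (hp.trans hq.symm)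
  simpa only [substSeq_eq_getElem_parse hne, hp, hq] using h

theorem parse_add_one_eq {H : A → List A} {hne : ∀ a, H a ≠ []} (hmark : MarkedSubst H hne)
    {x y : ℕ → A} {p q : ℕ} (hparse : parse H x p = parse H y q)
    (hletter : substSeq H x (p + 1) = substSeq H y (q + 1)) :
    parse H x (p + 1) = parse H y (q + 1) := by
  rcases Nat.lt_or_eq_of_le (Nat.succ_le_of_lt (parse_snd_lt hne x p)) with h | h
  · rw [parse_add_one_of_lt hne h, parse_add_one_of_lt hne (hparse ▸ h), hparse]
  · exact parse_eq_of_snd_eq_zero hmark (parse_add_one_snd_eq_zero hne h)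
      (parse_add_one_snd_eq_zero hne (hparse ▸ h)) hletter

/- Unless both parsings cut at the next position, one of them is strictly inside a block, and then
its state forces the next letter of the common word, hence the next state of both. -/
theorem parse_pair_add_one_eq {H : A → List A} {hne : ∀ a, H a ≠ []} (hmark : MarkedSubst H hne)
    {x y : ℕ → A} {p p' q q' : ℕ} (hx : parse H x p = parse H x p')
    (hy : parse H y q = parse H y q') (hxy : substSeq H x (p + 1) = substSeq H y (q + 1))
    (hxy' : substSeq H x (p' + 1) = substSeq H y (q' + 1))
    (hcut : ¬(p + 1 ∈ Set.range (blockStart H x) ∧ q + 1 ∈ Set.range (blockStart H y))) :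
    parse H x (p + 1) = parse H x (p' + 1) ∧ parse H y (q + 1) = parse H y (q' + 1) := by
  have hletter : ∀ {z : ℕ → A} {s t : ℕ}, parse H z s = parse H z t →
      s + 1 ∉ Set.range (blockStart H z) → substSeq H z (s + 1) = substSeq H z (t + 1) := by
    intro z s t hst hs
    have hlt := (Nat.succ_le_of_lt (parse_snd_lt hne z s)).lt_of_ne fun h =>
      hs ((parse_snd_eq_zero_iff hne).1 (parse_add_one_snd_eq_zero hne h))
    refine substSeq_eq_of_parse_eq hne ?_
    rw [parse_add_one_of_lt hne hlt, parse_add_one_of_lt hne (hst ▸ hlt), hst]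
  have hnext : substSeq H x (p + 1) = substSeq H x (p' + 1) := by
    rcases not_and_or.1 hcut with h | h
    · exact hletter hx h
    · rw [hxy, hletter hy h, ← hxy']
  exact ⟨parse_add_one_eq hmark hx hnext,
    parse_add_one_eq hmark hy (hxy.symm.trans (hnext.trans hxy'))⟩

theorem exists_eq_shifted_of_deterministic {X : Type*} {F : Finset X} {f : ℕ → X} {n : ℕ}
    (hF : ∀ s, f s ∈ F)
    (hdet : ∀ s t, s + 1 < n → t + 1 < n → f s = f t → f (s + 1) = f (t + 1)) :
    ∃ s t, s < t ∧ t ≤ F.card ∧ ∀ r, t + r < n → f (s + r) = f (t + r) := by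
  obtain ⟨s, hs, t, ht, hst, hf⟩ := Finset.exists_ne_map_eq_of_card_lt_of_maps_to
    (s := Finset.range (F.card + 1)) (by simp) fun s _ => hF s
  wlog hlt : s < t generalizing s t
  · exact this t ht s hs hst.symm hf.symm (hst.lt_or_gt.resolve_left hlt)
  refine ⟨s, t, hlt, Nat.lt_succ_iff.1 (Finset.mem_range.1 ht), fun r => ?_⟩
  induction r with
  | zero => exact fun _ => hf
  | succ r ih => exact fun hr => hdet (s + r) (t + r) (by omega) hr (ih (by omega))

theorem exists_eq_shifted_of_no_common_cut [Finite A] {H : A → List A} {hne : ∀ a, H a ≠ []}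
    (hmark : MarkedSubst H hne) :
    ∃ S, ∀ (x y : ℕ → A) (p q n : ℕ),
      (∀ s < n, substSeq H x (p + s) = substSeq H y (q + s)) →
      (∀ s < n, 0 < s →
        ¬(p + s ∈ Set.range (blockStart H x) ∧ q + s ∈ Set.range (blockStart H y))) →
      ∃ s t, s < t ∧ t ≤ S ∧
        ∀ r, t + r < n → substSeq H x (p + (s + r)) = substSeq H x (p + (t + r)) := by
  have := Fintype.ofFinite A
  obtain ⟨M, hM⟩ := exists_length_le H
  let states : Finset (A × ℕ) := Finset.univ ×ˢ Finset.range M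
  have hstates : ∀ (z : ℕ → A) q, parse H z q ∈ states := fun z q =>
    Finset.mem_product.2 ⟨Finset.mem_univ _,
      Finset.mem_range.2 ((parse_snd_lt hne z q).trans_le (hM _))⟩
  refine ⟨(states ×ˢ states).card, fun x y p q n hxy hcut => ?_⟩
  obtain ⟨s, t, hst, ht, hper⟩ := exists_eq_shifted_of_deterministic (F := states ×ˢ states)
    (f := fun s => (parse H x (p + s), parse H y (q + s))) (n := n)
    (fun s => Finset.mem_product.2 ⟨hstates x _, hstates y _⟩) fun s t hs ht h => by
      obtain ⟨hx, hy⟩ := Prod.ext_iff.1 h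
      exact Prod.ext_iff.2 (parse_pair_add_one_eq hmark hx hy (hxy _ hs) (hxy _ ht)
        (hcut _ hs s.succ_pos))
  exact ⟨s, t, hst, ht, fun r hr =>
    substSeq_eq_of_parse_eq hne (congrArg Prod.fst (hper r hr))⟩

theorem eq_add_mul_of_eq_add {X : Type*} {y : ℕ → X} {d n : ℕ}
    (h : ∀ r, r + d < n → y r = y (r + d)) {c r : ℕ} (hr : r + c * d < n) :
    y r = y (r + c * d) := by
  induction c with
  | zero => simp
  | succ c ih =>
    rw [Nat.succ_mul, ← add_assoc] at hr ⊢
    rw [ih (by omega), h _ hr]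

theorem exists_common_cut [Finite A] [Nontrivial A] {H : A → List A} {hne : ∀ a, H a ≠ []}
    (hprim : PrimitiveSubst H) (haper : AperiodicSubst H) (hmark : MarkedSubst H hne)
    {u : ℕ → A} (hu : IsFixedPointSubst H u) :
    ∃ l, ∀ (x : ℕ → A) (p q n : ℕ), l ≤ n → (∀ s < n, substSeq H x (p + s) = u (q + s)) →
      ∃ s < n, p + s ∈ Set.range (blockStart H x) ∧ q + s ∈ Set.range (blockStart H u) := by
  obtain ⟨S, hS⟩ := exists_eq_shifted_of_no_common_cut hmark
  obtain ⟨i, hi⟩ : ∃ i, u (i + S.factorial) ≠ u i := by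
    by_contra! h
    exact haper u hu ⟨S.factorial, S.factorial_pos, h⟩
  obtain ⟨R, hR⟩ := hprim.exists_prefix_recurrence hne hu (i + S.factorial + 1)
  refine ⟨S + 1 + R + i + S.factorial, fun x p q n hn hx => ?_⟩
  by_contra! hcut
  obtain ⟨s, t, hst, ht, hper⟩ := hS x u p q n (by rwa [hu])
    fun s hs _ h => hcut s hs h.1 h.2
  have hshift : ∀ r, r + (t - s) < n - s →
      u (q + s + r) = u (q + s + (r + (t - s))) := fun r hr => by
    have h := hper r (by omega)
    rw [hx _ (by omega), hx _ (by omega)] at h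
    rw [add_assoc, h]
    congr 1
    omega
  obtain ⟨c, hc⟩ : t - s ∣ S.factorial := Nat.dvd_factorial (by omega) (by omega)
  obtain ⟨w, hw, hwu⟩ := hR (q + s)
  have hprefix := prefixWord_eq_iff.1 hwu
  simp only [shift_iterate_apply] at hprefix
  have hfact := eq_add_mul_of_eq_add (y := fun r => u (q + s + r)) (c := c) (r := w + i) hshift
    (by rw [mul_comm, ← hc]; omega)
  rw [mul_comm, ← hc] at hfact
  apply hi
  rw [← hprefix i (by omega), ← hprefix (i + S.factorial) (by omega)]
  simpa only [add_assoc] using hfact.symm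

theorem eq_of_substSeq_eq {H : A → List A} {hne : ∀ a, H a ≠ []} (hmark : MarkedSubst H hne)
    {x y : ℕ → A} {n : ℕ} (h : ∀ q < n, substSeq H x q = substSeq H y q) (i : ℕ)
    (hi : blockStart H x i < n) : x i = y i := by
  induction i using Nat.strong_induction_on with
  | _ i ih =>
    have heq := blockStart_congr H fun j hj =>
      ih j hj ((blockStart_monotone H x hj.le).trans_lt hi)
    have hx := substSeq_blockStart_add hne x (List.length_pos_iff.2 (hne (x i)))
    have hy := substSeq_blockStart_add hne y (List.length_pos_iff.2 (hne (y i)))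
    rw [add_zero] at hx hy
    exact hmark.eq_of_getElem_zero_eq (hx ▸ hy ▸ heq ▸ h _ hi)

theorem eq_of_substSeq_eq_backward {H : A → List A} {hne : ∀ a, H a ≠ []}
    (hmark : MarkedSubst H hne) {x y : ℕ → A} {k p : ℕ} (hk : k < (H (x 0)).length) {b b' : ℕ}
    (halign : blockStart H x b + p = blockStart H y b' + k)
    (h : ∀ q q', k ≤ q → q < blockStart H x b → q + p = q' + k →
      substSeq H x q = substSeq H y q') :
    ∃ d, b' = d + b ∧ ∀ i < b, x i = y (d + i) := by
  induction b generalizing b' with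
  | zero => exact ⟨b', rfl, fun i hi => absurd hi (Nat.not_lt_zero i)⟩
  | succ b ih =>
    have hb : k < blockStart H x (b + 1) :=
      hk.trans_le ((blockStart_one H x).symm.trans_le (blockStart_monotone H x (by omega)))
    obtain ⟨c, rfl⟩ : ∃ c, b' = c + 1 := Nat.exists_eq_succ_of_ne_zero fun hb' => by
      rw [hb', blockStart_zero] at halign
      omega
    obtain ⟨r, hr⟩ := Nat.exists_eq_succ_of_ne_zero (List.length_pos_iff.2 (hne (x b))).ne'
    obtain ⟨s, hs⟩ := Nat.exists_eq_succ_of_ne_zero (List.length_pos_iff.2 (hne (y c))).ne'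
    rw [blockStart_succ] at hb halign h
    rw [blockStart_succ] at halign
    have hletter : x b = y c := by
      refine hmark.eq_of_getElem_last_eq hr.symm hs.symm ?_
      rw [← substSeq_blockStart_add hne x, ← substSeq_blockStart_add hne y]
      exact h _ _ (by omega) (by omega) (by omega)
    rw [hletter] at halign
    obtain ⟨d, rfl, hd⟩ := ih (b' := c) (by omega) fun q q' hq hqb => h q q' hq (by omega)
    refine ⟨d, rfl, fun i hi => ?_⟩
    rcases Nat.lt_succ_iff_lt_or_eq.1 hi with hi | rfl
    exacts [hd i hi, hletter]

/-- Recognizability of `H` with constant `l`, in the form of a desubstitution of prefixes: if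
`H(z)`, read from a position `k` of its first block, starts with at least `l` letters forming a
word of the language of `u`, then these letters are covered by the image of a prefix of `z`
which is itself in the language. -/
def DesubstBound (H : A → List A) (u : ℕ → A) (l : ℕ) : Prop :=
  ∀ (z : ℕ → A) (k n : ℕ), k < (H (z 0)).length → l ≤ n →
    prefixWord (shift^[k] (substSeq H z)) n ∈ Lang u →
    ∃ j, prefixWord z j ∈ Lang u ∧ k + n ≤ blockStart H z j

theorem exists_desubstBound [Finite A] [Nontrivial A] {H : A → List A} {hne : ∀ a, H a ≠ []}
    (hprim : PrimitiveSubst H) (haper : AperiodicSubst H) (hmark : MarkedSubst H hne)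
    {u : ℕ → A} (hu : IsFixedPointSubst H u) : ∃ l, DesubstBound H u l := by
  obtain ⟨l, hl⟩ := exists_common_cut hprim haper hmark hu
  refine ⟨l, fun z k n hk hn hlang => ?_⟩
  obtain ⟨p, hp⟩ := prefixWord_mem_Lang_iff.1 hlang
  simp only [shift_iterate_apply] at hp
  obtain ⟨s, hs, ⟨b, hb⟩, ⟨b', hb'⟩⟩ := hl z k p n hn hp
  obtain ⟨d, rfl, hback⟩ := eq_of_substSeq_eq_backward hmark (y := u) (p := p) (b := b) hk
    (b' := b') (by omega) fun q q' hq hqb hqq' => by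
      obtain ⟨t, rfl⟩ := Nat.exists_eq_add_of_le hq
      rw [hp t (by omega), hu, show q' = p + t by omega]
  have hforward := eq_of_substSeq_eq hmark (x := shift^[b] z) (y := shift^[d + b] u) (n := n - s)
    fun q hq => by
      rw [← shift_blockStart_substSeq hne, ← shift_blockStart_substSeq hne, hu, hb, hb',
        shift_iterate_apply, shift_iterate_apply, add_assoc, add_assoc, hp _ (by omega)]
  have hend := lt_blockStart_blockIndex_add_one hne z (k + n - 1)
  refine ⟨blockIndex H z (k + n - 1) + 1, prefixWord_mem_Lang_iff.2 ⟨d, fun i hi => ?_⟩, by omega⟩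
  rcases lt_or_ge i b with hib | hbi
  · exact hback i hib
  · obtain ⟨j, rfl⟩ := Nat.exists_eq_add_of_le hbi
    have hstart := (blockStart_monotone H z (Nat.lt_succ_iff.1 hi)).trans
      (blockStart_blockIndex_le H z (k + n - 1))
    rw [blockStart_add, hb] at hstart
    have h := hforward j (by omega)
    rwa [shift_iterate_apply, shift_iterate_apply, add_assoc] at h

/-- Every factor of length `l` of every iterated image `H^m(z)` is a word of the language, so that
`DesubstBound H u l` can be applied repeatedly, even when the prefixes met on the way are short. -/
def IteratesLocallyLegal (H : A → List A) (u : ℕ → A) (l : ℕ) (z : ℕ → A) : Prop :=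
  ∀ m i, factorAt ((substSeq H)^[m] z) i l ∈ Lang u

theorem IteratesLocallyLegal.shift_substSeq {H : A → List A} (hne : ∀ a, H a ≠ []) {u : ℕ → A}
    {l : ℕ} {z : ℕ → A} (h : IteratesLocallyLegal H u l z) (i : ℕ) :
    IteratesLocallyLegal H u l (shift^[i] (substSeq H z)) := fun m j => by
  rw [← shift_blockStart_iterate hne, ← Function.iterate_succ_apply, factorAt_eq,
    ← Function.iterate_add_apply, ← factorAt_eq]
  exact h _ _

/- Any two adjacent letters of `x` form a word of the language, and a factor of length `l` of a
high iterate of `x` lies in the image of two adjacent letters. -/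
theorem iteratesLocallyLegal_of_length_le {H : A → List A} (hne : ∀ a, H a ≠ []) {u : ℕ → A}
    (hu : IsFixedPointSubst H u) (hfull : TwoFull H u) {l N : ℕ}
    (hN : ∀ m ≥ N, ∀ a, l ≤ (substPow H m a).length) (x : ℕ → A) (j : ℕ) :
    IteratesLocallyLegal H u l (shift^[j] ((substSeq H)^[N] x)) := fun m i => by
  rw [← shift_blockStart_iterate hne, ← Function.iterate_add_apply, factorAt_eq,
    ← Function.iterate_add_apply]
  obtain ⟨b, r, hq, hr⟩ := exists_eq_blockStart_add (substPow_ne_nil hne (m + N)) x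
    (i + blockStart (substPow H m) ((substSeq H)^[N] x) j)
  have hpair := prefixWord_iterate_mem_Lang hne hu
    (hfull (prefixWord (shift^[b] x) 2) (length_prefixWord _ _)) (m + N)
  have hlen := hN (m + N) (Nat.le_add_left _ _) (shift^[b] x 1)
  rw [blockStart_succ, blockStart_one, shift_iterate_apply, add_zero] at hpair
  rw [hq, add_comm, Function.iterate_add_apply, shift_blockStart_iterate hne]
  exact prefixWord_shift_mem_Lang (prefixWord_mem_Lang_of_le hpair (by omega))

theorem DesubstBound.exists_prefix_mem_Lang {H : A → List A} (hne : ∀ a, H a ≠ []) {u : ℕ → A}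
    {l : ℕ} (hl : DesubstBound H u l) {z : ℕ → A} (hz : IteratesLocallyLegal H u l z) {m k n : ℕ}
    (hk : k < (substPow H m (z 0)).length) (hn : l ≤ n)
    (h : prefixWord (shift^[k] ((substSeq H)^[m] z)) n ∈ Lang u) :
    ∃ j, prefixWord z j ∈ Lang u ∧ k + n ≤ blockStart (substPow H m) z j := by
  induction m generalizing z k n with
  | zero =>
    obtain rfl : k = 0 := Nat.lt_one_iff.1 hk
    exact ⟨n, h, by rw [blockStart_substPow_zero, zero_add]⟩
  | succ m ih =>
    have hcomp := blockStart_substPow_add hne m 1 z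
    simp only [substPow_one, Function.iterate_one] at hcomp
    obtain ⟨i, r, rfl, hr⟩ := exists_eq_blockStart_add (substPow_ne_nil hne m) (substSeq H z) k
    rw [← blockStart_one, hcomp, blockStart_one] at hk
    have hi : i < (H (z 0)).length := by
      by_contra! hle
      have := blockStart_monotone (substPow H m) (substSeq H z) hle
      omega
    rw [Function.iterate_succ_apply, add_comm, Function.iterate_add_apply,
      shift_blockStart_iterate hne] at h
    obtain ⟨j, hj, hjn⟩ := ih (hz.shift_substSeq hne i) (by rwa [shift_iterate_apply]) hn h
    have hmax : prefixWord (shift^[i] (substSeq H z)) (max l j) ∈ Lang u := by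
      rcases max_choice l j with h | h <;> rw [h]
      exacts [factorAt_eq (substSeq H z) i l ▸ hz 1 i, hj]
    obtain ⟨j', hj', hle⟩ := hl z i _ hi (le_max_left l j) hmax
    refine ⟨j', hj', ?_⟩
    calc blockStart (substPow H m) (substSeq H z) i + r + n
        ≤ blockStart (substPow H m) (substSeq H z) (i + max l j) := by
          have := blockStart_monotone (substPow H m) (shift^[i] (substSeq H z)) (le_max_right l j)
          rw [blockStart_add]
          omega
      _ ≤ blockStart (substPow H (m + 1)) z j' := by
          rw [hcomp]
          exact blockStart_monotone _ _ hle

end Recognizability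

section UniqueErgodicity

variable {X : Type*}

theorem exists_norm_le_of_continuous [TopologicalSpace X] [CompactSpace X] {f : X → ℝ}
    (hf : Continuous f) : ∃ B, 0 ≤ B ∧ ∀ x, ‖f x‖ ≤ B :=
  let φ := BoundedContinuousFunction.mkOfCompact ⟨f, hf⟩
  ⟨‖φ‖, norm_nonneg φ, φ.norm_coe_le_norm⟩

variable [MeasurableSpace X]

/-- The measure `μ` is the only possible invariant probability measure of `T` carried by `K`:
the uniqueness half of unique ergodicity of `T` on `K`. -/
def IsUniqueInvariantMeasureOn (T : X → X) (K : Set X) (μ : Measure X) : Prop :=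
  ∀ ν : Measure X, IsProbabilityMeasure ν → Measure.map T ν = ν → ν Kᶜ = 0 → ν = μ

/-- The empirical measure of the orbit segment `x, T x, …, T^(n-1) x`
(the zero measure when `n = 0`). -/
noncomputable def empiricalMeasure (T : X → X) (n : ℕ) (x : X) : Measure X :=
  (n : ENNReal)⁻¹ • ∑ i ∈ Finset.range n, Measure.dirac (T^[i] x)

theorem isProbabilityMeasure_empiricalMeasure (T : X → X) {n : ℕ} (hn : n ≠ 0) (x : X) :
    IsProbabilityMeasure (empiricalMeasure T n x) where
  measure_univ := by
    simp only [empiricalMeasure, Measure.smul_apply, Measure.finsetSum_apply, measure_univ,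
      Finset.sum_const, Finset.card_range, smul_eq_mul, nsmul_eq_mul, mul_one]
    exact ENNReal.inv_mul_cancel (by simpa using hn) (ENNReal.natCast_ne_top n)

theorem empiricalMeasure_compl_eq_zero {T : X → X} {K : Set X} (hK : MeasurableSet K)
    (hT : Set.MapsTo T K K) {x : X} (hx : x ∈ K) (n : ℕ) : empiricalMeasure T n x Kᶜ = 0 := by
  simp only [empiricalMeasure, Measure.smul_apply, Measure.finsetSum_apply, smul_eq_mul]
  rw [Finset.sum_eq_zero, mul_zero]
  intro i _
  simp [Measure.dirac_apply' _ hK.compl, hT.iterate i hx]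

variable [TopologicalSpace X] [BorelSpace X]

theorem measure_compl_eq_zero_of_tendsto [HasOuterApproxClosed X] {ι : Type*} {l : Filter ι}
    {ν : ι → ProbabilityMeasure X} {ν' : ProbabilityMeasure X} [l.NeBot] (hν : Tendsto ν l (𝓝 ν'))
    {K : Set X} (hK : IsClosed K) (h : ∀ i, (ν i : Measure X) Kᶜ = 0) :
    (ν' : Measure X) Kᶜ = 0 := by
  simpa [h] using ProbabilityMeasure.le_liminf_measure_open_of_tendsto hν hK.isOpen_compl

variable [CompactSpace X]

theorem integral_empiricalMeasure (T : X → X) {f : X → ℝ} (hf : Continuous f) (n : ℕ) (x : X) :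
    ∫ y, f y ∂empiricalMeasure T n x = birkhoffAverage ℝ T f n x := by
  obtain ⟨B, -, hB⟩ := exists_norm_le_of_continuous hf
  have hint : ∀ i ∈ Finset.range n, Integrable f (Measure.dirac (T^[i] x)) := fun i _ =>
    (integrable_const B).mono' hf.aestronglyMeasurable (ae_of_all _ hB)
  simp [empiricalMeasure, integral_smul_measure, integral_finsetSum_measure hint,
    integral_dirac' _ _ hf.stronglyMeasurable, birkhoffAverage, birkhoffSum]

variable [TopologicalSpace.MetrizableSpace X]

theorem map_eq_of_tendsto_empiricalMeasure {ι : Type*} {l : Filter ι} [l.NeBot]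
    {ν : ι → ProbabilityMeasure X} {ν' : ProbabilityMeasure X} {T : X → X} (hT : Continuous T)
    {n : ι → ℕ} {x : ι → X} (hn : Tendsto n l atTop) (hν : Tendsto ν l (𝓝 ν'))
    (h : ∀ i, (ν i : Measure X) = empiricalMeasure T (n i) (x i)) :
    Measure.map T (ν' : Measure X) = ν' := by
  have := Measure.isProbabilityMeasure_map (μ := (ν' : Measure X)) hT.aemeasurable
  refine ext_of_forall_integral_eq_of_IsFiniteMeasure fun f => ?_
  rw [integral_map hT.aemeasurable f.continuous.aestronglyMeasurable]
  have hlim := ProbabilityMeasure.tendsto_iff_forall_integral_tendsto.1 hν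
  refine tendsto_nhds_unique (hlim (f.compContinuous ⟨T, hT⟩)) ?_
  refine (hlim f).congr_dist ?_
  refine squeeze_zero (fun _ => dist_nonneg) (fun i => ?_)
    (tendsto_const_nhds.div_atTop (tendsto_natCast_atTop_atTop.comp hn) (a := 2 * ‖f‖))
  have hshift : birkhoffAverage ℝ T (fun y => f (T y)) (n i) (x i)
      = birkhoffAverage ℝ T f (n i) (T (x i)) := by
    simp [birkhoffAverage, birkhoffSum, ← Function.iterate_succ_apply',
      Function.iterate_succ_apply]
  change dist (∫ y, f y ∂(ν i : Measure X)) (∫ y, f (T y) ∂(ν i : Measure X)) ≤ _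
  rw [h i, integral_empiricalMeasure T f.continuous,
    integral_empiricalMeasure T (f.continuous.comp hT) (f := fun y => f (T y)), hshift, dist_comm,
    dist_birkhoffAverage_apply_birkhoffAverage]
  exact div_le_div_of_nonneg_right (f.dist_le_two_norm _ _) (Nat.cast_nonneg _)

theorem IsUniqueInvariantMeasureOn.tendstoUniformlyOn {T : X → X} (hT : Continuous T) {K : Set X}
    (hK : IsClosed K) (hTK : Set.MapsTo T K K) {μ : Measure X}
    (hμ : IsUniqueInvariantMeasureOn T K μ) {f : X → ℝ} (hf : Continuous f) :
    TendstoUniformlyOn (birkhoffAverage ℝ T f) (fun _ => ∫ y, f y ∂μ) atTop K := by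
  by_contra hnot
  obtain ⟨ε, hε, hbad⟩ : ∃ ε > 0, ∀ N, ∃ n ≥ N, ∃ x ∈ K,
      ε ≤ dist (∫ y, f y ∂μ) (birkhoffAverage ℝ T f n x) := by
    simpa [Metric.tendstoUniformlyOn_iff, frequently_atTop] using hnot
  choose n hn x hx hfar using fun N => hbad (N + 1)
  let ν (N : ℕ) : ProbabilityMeasure X := ⟨empiricalMeasure T (n N) (x N),
    isProbabilityMeasure_empiricalMeasure T (Nat.ne_zero_of_lt (hn N)) (x N)⟩
  let F : Ultrafilter ℕ := Ultrafilter.of atTop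
  have hF : (F : Filter ℕ) ≤ atTop := Ultrafilter.of_le _
  obtain ⟨ν', hν'⟩ : ∃ ν', Tendsto ν F (𝓝 ν') := ⟨(F.map ν).lim, (F.map ν).le_nhds_lim⟩
  have hinv : Measure.map T (ν' : Measure X) = ν' :=
    map_eq_of_tendsto_empiricalMeasure hT
      ((tendsto_atTop_mono (fun N => (Nat.lt_of_succ_le (hn N)).le) tendsto_id).mono_left hF) hν'
      fun _ => rfl
  have hsupp : (ν' : Measure X) Kᶜ = 0 := measure_compl_eq_zero_of_tendsto hν' hK fun N =>
    empiricalMeasure_compl_eq_zero hK.measurableSet hTK (hx N) (n N)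
  have hlim : Tendsto (fun N => birkhoffAverage ℝ T f (n N) (x N)) F (𝓝 (∫ y, f y ∂μ)) := by
    rw [← hμ ν' inferInstance hinv hsupp]
    simpa [ν, integral_empiricalMeasure T hf] using
      ProbabilityMeasure.tendsto_iff_forall_integral_tendsto.1 hν'
        (BoundedContinuousFunction.mkOfCompact ⟨f, hf⟩)
  obtain ⟨N, hN⟩ := (hlim.eventually (Metric.ball_mem_nhds _ hε)).exists
  exact absurd (dist_comm (α := ℝ) _ _ ▸ Metric.mem_ball.1 hN) (hfar N).not_gt

theorem IsUniqueInvariantMeasureOn.abs_birkhoffSum_sub_le {T : X → X} (hT : Continuous T)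
    {K : Set X} (hK : IsClosed K) (hTK : Set.MapsTo T K K) {μ : Measure X}
    (hμ : IsUniqueInvariantMeasureOn T K μ) {f : X → ℝ} (hf : Continuous f) {ε : ℝ} (hε : 0 < ε) :
    ∃ C, ∀ x ∈ K, ∀ n : ℕ, |birkhoffSum T f n x - n * ∫ y, f y ∂μ| ≤ ε * n + C := by
  obtain ⟨N, hN⟩ := eventually_atTop.1
    (Metric.tendstoUniformlyOn_iff.1 (hμ.tendstoUniformlyOn hT hK hTK hf) ε hε)
  obtain ⟨B, hB0, hB⟩ := exists_norm_le_of_continuous hf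
  set c := ∫ y, f y ∂μ
  refine ⟨N * (B + |c|), fun x hx n => ?_⟩
  rcases le_total N n with hn | hn
  · have h := hN n hn x hx
    rcases n.eq_zero_or_pos with rfl | hpos
    · simpa using by positivity
    · have hpos' : (0 : ℝ) < n := Nat.cast_pos.2 hpos
      have hsplit : birkhoffSum T f n x - n * c = n * (birkhoffAverage ℝ T f n x - c) := by
        rw [birkhoffAverage, smul_eq_mul]
        field_simp
      rw [dist_comm, Real.dist_eq] at h
      rw [hsplit, abs_mul, Nat.abs_cast]
      nlinarith [mul_nonneg (Nat.cast_nonneg (α := ℝ) N) (add_nonneg hB0 (abs_nonneg c))]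
  · have hsum : |birkhoffSum T f n x| ≤ n * B := by
      simpa [birkhoffSum] using
        norm_sum_le_of_le (Finset.range n) fun i _ => hB (T^[i] x)
    calc |birkhoffSum T f n x - n * c| ≤ n * B + n * |c| := by
          refine (abs_sub _ _).trans (add_le_add hsum ?_)
          rw [abs_mul, Nat.abs_cast]
      _ ≤ N * (B + |c|) := by
          rw [← mul_add]
          gcongr
      _ ≤ ε * n + N * (B + |c|) := le_add_of_nonneg_left (by positivity)

end UniqueErgodicity

section FullShift

variable [TopologicalSpace A]

theorem continuous_shift : Continuous (shift : (ℕ → A) → (ℕ → A)) :=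
  continuous_pi fun n => continuous_apply (n + 1)

variable [DiscreteTopology A] {u z : ℕ → A}

theorem isLocallyConstant_of_cylinder {Y : Type*} {f : (ℕ → A) → Y} (n : ℕ)
    (h : ∀ z z' : ℕ → A, (∀ i < n, z i = z' i) → f z = f z') : IsLocallyConstant f :=
  (IsLocallyConstant.iff_exists_open f).2 fun z =>
    ⟨PiNat.cylinder z n, PiNat.isOpen_cylinder (fun _ => A) z n, PiNat.self_mem_cylinder z n,
      fun z' hz' => h z' z hz'⟩

theorem continuous_substSeq {H : A → List A} (hne : ∀ a, H a ≠ []) : Continuous (substSeq H) :=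
  continuous_pi fun n => (isLocallyConstant_of_cylinder (n + 1) fun z z' h =>
    substSeq_congr hne h (by simpa using le_blockStart hne z (n + 1))).continuous

theorem mem_orbitClosure_iff : z ∈ orbitClosure u ↔ ∀ n, prefixWord z n ∈ Lang u := by
  simp only [orbitClosure, mem_closure_iff, prefixWord_mem_Lang_iff]
  constructor
  · intro h n
    obtain ⟨_, hz, p, rfl⟩ := h _ (PiNat.isOpen_cylinder (fun _ => A) z n)
      (PiNat.self_mem_cylinder z n)
    exact ⟨p, fun i hi => by rw [← hz i hi, shift_iterate_apply]⟩
  · intro h o ho hzo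
    obtain ⟨_, ⟨x, n, rfl⟩, hzx, hxo⟩ :=
      (PiNat.isTopologicalBasis_cylinders (fun _ => A)).exists_subset_of_mem_open hzo ho
    obtain ⟨p, hp⟩ := h n
    exact ⟨shift^[p] u, hxo fun i hi => by rw [shift_iterate_apply, ← hp i hi, hzx i hi], p, rfl⟩

theorem mapsTo_shift_orbitClosure (u : ℕ → A) :
    Set.MapsTo shift (orbitClosure u) (orbitClosure u) := fun _ hz =>
  mem_orbitClosure_iff.2 fun n =>
    prefixWord_shift_mem_Lang (k := 1) (mem_orbitClosure_iff.1 hz (1 + n))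

theorem isGreatest_delta (hz : z ∉ orbitClosure u) :
    IsGreatest {n | prefixWord z n ∈ Lang u} (delta u z) := by
  obtain ⟨N, hN⟩ := not_forall.1 (mt mem_orbitClosure_iff.2 hz)
  have hbdd : BddAbove {n | prefixWord z n ∈ Lang u} :=
    ⟨N, fun n hn => not_lt.1 fun hlt => hN (prefixWord_mem_Lang_of_le hn hlt.le)⟩
  exact ⟨Nat.sSup_mem ⟨0, prefixWord_mem_Lang_iff.2 ⟨0, by simp⟩⟩ hbdd, fun _ => le_csSup hbdd⟩

theorem exists_forall_abs_sub_lt_of_continuous [Finite A] {f : (ℕ → A) → ℝ} (hf : Continuous f)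
    {ε : ℝ} (hε : 0 < ε) : ∃ n, ∀ z z' : ℕ → A, (∀ i < n, z i = z' i) → |f z - f z'| < ε := by
  let _ := PiNat.metricSpace (E := fun _ : ℕ => A)
  obtain ⟨δ, hδ, h⟩ :=
    Metric.uniformContinuous_iff.1 (CompactSpace.uniformContinuous_of_continuous hf) ε hε
  obtain ⟨n, hn⟩ := exists_pow_lt_of_lt_one hδ (one_half_lt_one (α := ℝ))
  exact ⟨n, fun z z' hz => h ((PiNat.mem_cylinder_iff_dist_le.1 hz).trans_lt hn)⟩

theorem exists_abs_birkhoffSum_sub_birkhoffSum_le [Finite A] {f : (ℕ → A) → ℝ}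
    (hf : Continuous f) {ε : ℝ} (hε : 0 < ε) : ∃ C, ∀ (z z' : ℕ → A) (n : ℕ),
      (∀ i < n, z i = z' i) →
        |birkhoffSum shift f n z - birkhoffSum shift f n z'| ≤ ε * n + C := by
  obtain ⟨r, hr⟩ := exists_forall_abs_sub_lt_of_continuous hf hε
  obtain ⟨B, hB0, hB⟩ := exists_norm_le_of_continuous hf
  refine ⟨r * (2 * B), fun z z' n hz => ?_⟩
  have hfar : ∀ w w' : ℕ → A, dist (f w) (f w') ≤ 2 * B := fun w w' => by
    linarith [dist_le_norm_add_norm (f w) (f w'), hB w, hB w']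
  have hterm : ∀ i ∈ Finset.range n, dist (f (shift^[i] z)) (f (shift^[i] z'))
      ≤ ε + if n - r ≤ i then 2 * B else 0 := fun i _ => by
    split_ifs with hi
    · linarith [hfar (shift^[i] z) (shift^[i] z')]
    · rw [add_zero]
      refine (hr _ _ fun t ht => ?_).le
      rw [shift_iterate_apply, shift_iterate_apply, hz _ (by omega)]
  have hcard : ((Finset.range n).filter (n - r ≤ ·)).card ≤ r := by
    have hsub : (Finset.range n).filter (n - r ≤ ·) ⊆ Finset.Ico (n - r) n := fun i hi => by
      simpa [and_comm] using hi
    exact (Finset.card_le_card hsub).trans (by rw [Nat.card_Ico]; omega)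
  calc |birkhoffSum shift f n z - birkhoffSum shift f n z'|
      ≤ ∑ i ∈ Finset.range n, dist (f (shift^[i] z)) (f (shift^[i] z')) :=
        dist_birkhoffSum_birkhoffSum_le shift f n z z'
    _ ≤ ∑ i ∈ Finset.range n, (ε + if n - r ≤ i then 2 * B else 0) := Finset.sum_le_sum hterm
    _ = ε * n + ((Finset.range n).filter (n - r ≤ ·)).card * (2 * B) := by
        rw [Finset.sum_add_distrib, ← Finset.sum_filter]
        simp [mul_comm]
    _ ≤ ε * n + r * (2 * B) := by gcongr

theorem exists_forall_le_of_prefixWord_mem_Lang [Finite A] {G : (ℕ → A) → ℝ}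
    (hG : Continuous G) (hpos : ∀ y ∈ orbitClosure u, 0 < G y) :
    ∃ c > 0, ∃ n, ∀ y, prefixWord y n ∈ Lang u → c ≤ G y := by
  obtain ⟨y₀, hy₀, hmin⟩ := isClosed_closure.isCompact.exists_isMinOn
    (s := orbitClosure u) ⟨u, subset_closure ⟨0, rfl⟩⟩ hG.continuousOn
  obtain ⟨n, hn⟩ := exists_forall_abs_sub_lt_of_continuous hG (half_pos (hpos y₀ hy₀))
  refine ⟨G y₀ / 2, half_pos (hpos y₀ hy₀), n, fun y hy => ?_⟩
  obtain ⟨p, hp⟩ := prefixWord_mem_Lang_iff.1 hy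
  have hclose := hn y (shift^[p] u) fun i hi => by rw [shift_iterate_apply, hp i hi]
  have hge : G y₀ ≤ G (shift^[p] u) := hmin (subset_closure ⟨p, rfl⟩)
  linarith [(abs_lt.1 hclose).1]

variable [Finite A] [MeasurableSpace A] [BorelSpace A]

theorem IsUniqueInvariantMeasureOn.abs_birkhoffSum_sub_le_of_mem_Lang {μ : Measure (ℕ → A)}
    (hμ : IsUniqueInvariantMeasureOn shift (orbitClosure u) μ) {f : (ℕ → A) → ℝ}
    (hf : Continuous f) {ε : ℝ} (hε : 0 < ε) : ∃ C, ∀ (z : ℕ → A) (n : ℕ),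
      prefixWord z n ∈ Lang u → |birkhoffSum shift f n z - n * ∫ y, f y ∂μ| ≤ ε * n + C := by
  obtain ⟨C₁, hcompare⟩ := exists_abs_birkhoffSum_sub_birkhoffSum_le hf (half_pos hε)
  obtain ⟨C₂, herg⟩ := hμ.abs_birkhoffSum_sub_le continuous_shift isClosed_closure
    (mapsTo_shift_orbitClosure u) hf (half_pos hε)
  refine ⟨C₁ + C₂, fun z n hz => ?_⟩
  obtain ⟨p, hp⟩ := prefixWord_mem_Lang_iff.1 hz
  have horbit := herg (shift^[p] u) (subset_closure ⟨p, rfl⟩) n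
  have hclose := hcompare z (shift^[p] u) n fun i hi => by rw [shift_iterate_apply, hp i hi]
  calc |birkhoffSum shift f n z - n * ∫ y, f y ∂μ|
      ≤ ε / 2 * n + C₁ + (ε / 2 * n + C₂) :=
        (abs_sub_le _ _ _).trans (add_le_add hclose horbit)
    _ = ε * n + (C₁ + C₂) := by ring

end FullShift

section HarmonicSums

variable {ι : Type*} {l : Filter ι} {p L : ι → ℕ} {ρ : ℝ}

theorem eventually_pos_and_lt_of_tendsto_div (hp : Tendsto p l atTop)
    (hρ : Tendsto (fun i => (L i : ℝ) / p i) l (𝓝 ρ)) (h1 : 1 < ρ) :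
    ∀ᶠ i in l, (0 : ℝ) < p i ∧ (p i : ℝ) < L i := by
  filter_upwards [hp.eventually_gt_atTop 0, hρ.eventually (lt_mem_nhds h1)] with i hpos hlt
  have hpos' : (0 : ℝ) < p i := Nat.cast_pos.2 hpos
  exact ⟨hpos', (one_lt_div hpos').1 hlt⟩

theorem tendsto_sub_atTop_of_tendsto_div (hp : Tendsto p l atTop)
    (hρ : Tendsto (fun i => (L i : ℝ) / p i) l (𝓝 ρ)) (h1 : 1 < ρ) :
    Tendsto (fun i => (L i : ℝ) - p i) l atTop := by
  refine ((tendsto_natCast_atTop_atTop.comp hp).atTop_mul_pos (sub_pos.2 h1)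
    (hρ.sub_const 1)).congr' ?_
  filter_upwards [eventually_pos_and_lt_of_tendsto_div hp hρ h1] with i ⟨hpos, _⟩
  rw [Function.comp_apply]
  field_simp

theorem tendsto_div_sub_of_tendsto_div (hp : Tendsto p l atTop)
    (hρ : Tendsto (fun i => (L i : ℝ) / p i) l (𝓝 ρ)) (h1 : 1 < ρ) :
    Tendsto (fun i => (p i : ℝ) / (L i - p i)) l (𝓝 (ρ - 1)⁻¹) := by
  refine ((hρ.sub_const 1).inv₀ (sub_pos.2 h1).ne').congr' ?_
  filter_upwards [eventually_pos_and_lt_of_tendsto_div hp hρ h1] with i ⟨hpos, _⟩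
  change ((L i : ℝ) / p i - 1)⁻¹ = _
  rw [div_sub_one hpos.ne', inv_div]

theorem sum_range_inv_sub_eq_harmonic_sub {p L : ℕ} (h : p ≤ L) :
    ∑ k ∈ Finset.range p, ((L : ℝ) - k)⁻¹ = (harmonic L : ℝ) - harmonic (L - p) := by
  induction p with
  | zero => simp
  | succ p ih =>
    obtain ⟨d, rfl⟩ : ∃ d, L = p + 1 + d := Nat.exists_eq_add_of_le h
    rw [Finset.sum_range_succ, ih (by omega), show p + 1 + d - p = d + 1 by omega,
      Nat.add_sub_cancel_left, harmonic_succ]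
    push_cast
    ring

theorem tendsto_sum_inv_sub (hp : Tendsto p l atTop)
    (hρ : Tendsto (fun i => (L i : ℝ) / p i) l (𝓝 ρ)) (h1 : 1 < ρ) :
    Tendsto (fun i => ∑ k ∈ Finset.range (p i), ((L i : ℝ) - k)⁻¹) l
      (𝓝 (Real.log (ρ / (ρ - 1)))) := by
  have hlt := eventually_pos_and_lt_of_tendsto_div hp hρ h1
  have hL : Tendsto L l atTop :=
    tendsto_atTop_mono' l (hlt.mono fun i h => by exact_mod_cast h.2.le) hp
  have hgap : Tendsto (fun i => L i - p i) l atTop := by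
    rw [← tendsto_natCast_atTop_iff (R := ℝ)]
    refine (tendsto_sub_atTop_of_tendsto_div hp hρ h1).congr' (hlt.mono fun i h => ?_)
    exact (Nat.cast_sub (by exact_mod_cast h.2.le)).symm
  have hlog : Tendsto (fun i => Real.log ((L i : ℝ) / p i / (L i / p i - 1))) l
      (𝓝 (Real.log (ρ / (ρ - 1)))) :=
    (hρ.div (hρ.sub_const 1) (sub_pos.2 h1).ne').log
      (div_pos (one_pos.trans h1) (sub_pos.2 h1)).ne'
  have hγ := ((Real.tendsto_harmonic_sub_log.comp hL).sub
    (Real.tendsto_harmonic_sub_log.comp hgap)).add hlog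
  rw [sub_self, zero_add] at hγ
  refine hγ.congr' (hlt.mono fun i ⟨hpos, hpL⟩ => ?_)
  have hle : p i ≤ L i := by exact_mod_cast hpL.le
  have hratio : (L i : ℝ) / p i / (L i / p i - 1) = L i / (L i - p i) := by
    rw [div_sub_one hpos.ne', div_div_div_cancel_right₀ hpos.ne']
  simp only [Function.comp_apply, sum_range_inv_sub_eq_harmonic_sub hle, hratio,
    Real.log_div (hpos.trans hpL).ne' (sub_pos.2 hpL).ne', Nat.cast_sub hle]
  ring

theorem abs_sum_mul_le_of_monotoneOn {a w : ℕ → ℝ} {M : ℝ} {n : ℕ} (hw0 : 0 ≤ w 0)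
    (hw : MonotoneOn w (Set.Iic n)) (hM : ∀ k ≤ n, |∑ i ∈ Finset.range k, a i| ≤ M) :
    |∑ k ∈ Finset.range n, w k * a k| ≤ 2 * M * w n := by
  have hM0 : 0 ≤ M := (abs_nonneg _).trans (hM 0 (Nat.zero_le n))
  have hwn : ∀ k ≤ n, 0 ≤ w k := fun k hk =>
    hw0.trans (hw (Set.mem_Iic.2 (Nat.zero_le n)) hk (Nat.zero_le k))
  rcases n with - | n
  · simpa using mul_nonneg (mul_nonneg zero_le_two hM0) hw0
  have hstep : ∀ k < n, 0 ≤ w (k + 1) - w k := fun k hk => sub_nonneg.2 <|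
    hw (Set.mem_Iic.2 (by omega)) (Set.mem_Iic.2 (by omega)) (Nat.le_succ k)
  have hparts := Finset.sum_range_by_parts w a (n + 1)
  simp only [smul_eq_mul, Nat.add_sub_cancel] at hparts
  have hend : |w n * ∑ i ∈ Finset.range (n + 1), a i| ≤ w n * M := by
    rw [abs_mul, abs_of_nonneg (hwn n n.le_succ)]
    exact mul_le_mul_of_nonneg_left (hM _ le_rfl) (hwn n n.le_succ)
  have hincr : |∑ k ∈ Finset.range n, (w (k + 1) - w k) * ∑ i ∈ Finset.range (k + 1), a i|
      ≤ (w n - w 0) * M := by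
    rw [← Finset.sum_range_sub w n, Finset.sum_mul]
    refine (Finset.abs_sum_le_sum_abs _ _).trans (Finset.sum_le_sum fun k hk => ?_)
    have hk' := Finset.mem_range.1 hk
    rw [abs_mul, abs_of_nonneg (hstep k hk')]
    exact mul_le_mul_of_nonneg_left (hM _ (by omega)) (hstep k hk')
  have hmono : w n ≤ w (n + 1) :=
    hw (Set.mem_Iic.2 n.le_succ) (Set.mem_Iic.2 le_rfl) n.le_succ
  rw [hparts]
  refine (abs_sub _ _).trans ?_
  nlinarith

theorem tendsto_sum_div_sub_zero (hp : Tendsto p l atTop)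
    (hρ : Tendsto (fun i => (L i : ℝ) / p i) l (𝓝 ρ)) (h1 : 1 < ρ) {a : ι → ℕ → ℝ}
    (ha : ∀ ε > 0, ∃ C, ∀ i, ∀ n ≤ p i, |∑ k ∈ Finset.range n, a i k| ≤ ε * n + C) :
    Tendsto (fun i => ∑ k ∈ Finset.range (p i), a i k / ((L i : ℝ) - k)) l (𝓝 0) := by
  have hρ1 : 0 < ρ - 1 := sub_pos.2 h1
  rw [Metric.tendsto_nhds]
  intro η hη
  obtain ⟨ε, hε, hεη⟩ : ∃ ε > 0, 2 * ε * (ρ - 1)⁻¹ < η :=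
    ⟨η * (ρ - 1) / 4, by positivity, by field_simp; norm_num⟩
  obtain ⟨C, hC⟩ := ha ε hε
  have hbound : Tendsto (fun i => 2 * ε * ((p i : ℝ) / (L i - p i)) + 2 * C * ((L i : ℝ) - p i)⁻¹)
      l (𝓝 (2 * ε * (ρ - 1)⁻¹ + 2 * C * 0)) :=
    ((tendsto_div_sub_of_tendsto_div hp hρ h1).const_mul _).add
      ((tendsto_inv_atTop_zero.comp (tendsto_sub_atTop_of_tendsto_div hp hρ h1)).const_mul _)
  filter_upwards [eventually_pos_and_lt_of_tendsto_div hp hρ h1,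
    hbound.eventually (gt_mem_nhds (by simpa using hεη))] with i ⟨_, hpL⟩ hi
  have hgap : ∀ k ≤ p i, 0 < (L i : ℝ) - k := fun k hk =>
    sub_pos.2 ((Nat.cast_le.2 hk).trans_lt hpL)
  have hw : MonotoneOn (fun k : ℕ => ((L i : ℝ) - k)⁻¹) (Set.Iic (p i)) := fun j _ k hk hjk =>
    inv_anti₀ (hgap k hk) (by gcongr)
  have habel := abs_sum_mul_le_of_monotoneOn (a := a i) (M := ε * p i + C)
    (inv_nonneg.2 (hgap 0 (Nat.zero_le _)).le) hw fun k hk => (hC i k hk).trans (by gcongr)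
  simp only [← div_eq_inv_mul] at habel
  rw [Real.dist_eq, sub_zero]
  refine (habel.trans_eq ?_).trans_lt hi
  ring

theorem tendsto_sum_div_sub (hp : Tendsto p l atTop)
    (hρ : Tendsto (fun i => (L i : ℝ) / p i) l (𝓝 ρ)) (h1 : 1 < ρ) {a : ι → ℕ → ℝ} {c : ℝ}
    (ha : ∀ ε > 0, ∃ C, ∀ i, ∀ n ≤ p i, |∑ k ∈ Finset.range n, a i k - n * c| ≤ ε * n + C) :
    Tendsto (fun i => ∑ k ∈ Finset.range (p i), a i k / ((L i : ℝ) - k)) l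
      (𝓝 (c * Real.log (ρ / (ρ - 1)))) := by
  have hosc := tendsto_sum_div_sub_zero hp hρ h1 (a := fun i k => a i k - c)
    (by simpa [Finset.sum_sub_distrib] using ha)
  rw [← zero_add (c * _)]
  refine (hosc.add ((tendsto_sum_inv_sub hp hρ h1).const_mul c)).congr fun i => ?_
  rw [Finset.mul_sum, ← Finset.sum_add_distrib]
  exact Finset.sum_congr rfl fun k _ => by ring

theorem tendsto_sum_div_sub_rpow_zero (hp : Tendsto p l atTop)
    (hρ : Tendsto (fun i => (L i : ℝ) / p i) l (𝓝 ρ)) (h1 : 1 < ρ) {α : ℝ} (hα : 1 < α)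
    {a : ι → ℕ → ℝ} {B : ℝ} (ha : ∀ i k, |a i k| ≤ B) :
    Tendsto (fun i => ∑ k ∈ Finset.range (p i), a i k / ((L i : ℝ) - k) ^ α) l (𝓝 0) := by
  have hlim := ((tendsto_div_sub_of_tendsto_div hp hρ h1).mul
    ((tendsto_rpow_neg_atTop (sub_pos.2 hα)).comp
      (tendsto_sub_atTop_of_tendsto_div hp hρ h1))).const_mul B
  rw [mul_zero, mul_zero] at hlim
  refine squeeze_zero_norm' ?_ hlim
  filter_upwards [eventually_pos_and_lt_of_tendsto_div hp hρ h1] with i ⟨_, hpL⟩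
  have hgap : 0 < (L i : ℝ) - p i := sub_pos.2 hpL
  have hterm : ∀ k ∈ Finset.range (p i),
      ‖a i k / ((L i : ℝ) - k) ^ α‖ ≤ B / ((L i : ℝ) - p i) ^ α := fun k hk => by
    have hk' : (k : ℝ) ≤ p i := Nat.cast_le.2 (Finset.mem_range.1 hk).le
    have hpow : ((L i : ℝ) - p i) ^ α ≤ ((L i : ℝ) - k) ^ α := by gcongr
    have hpos : 0 < ((L i : ℝ) - p i) ^ α := Real.rpow_pos_of_pos hgap α
    rw [norm_div, Real.norm_of_nonneg (hpos.le.trans hpow)]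
    exact div_le_div₀ ((abs_nonneg _).trans (ha i k)) (ha i k) hpos hpow
  refine (norm_sum_le_of_le _ hterm).trans_eq ?_
  rw [Finset.sum_const, Finset.card_range, nsmul_eq_mul, Function.comp_apply, neg_sub,
    Real.rpow_sub hgap, Real.rpow_one]
  field_simp

theorem tendsto_sum_div_sub_rpow_atTop (hp : Tendsto p l atTop)
    (hρ : Tendsto (fun i => (L i : ℝ) / p i) l (𝓝 ρ)) (h1 : 1 < ρ) {α : ℝ} (hα0 : 0 < α)
    (hα : α < 1) {a : ι → ℕ → ℝ} {c : ℝ} (hc : 0 < c) (ha : ∀ᶠ i in l, ∀ k < p i, c ≤ a i k) :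
    Tendsto (fun i => ∑ k ∈ Finset.range (p i), a i k / ((L i : ℝ) - k) ^ α) l atTop := by
  have hlt := eventually_pos_and_lt_of_tendsto_div hp hρ h1
  have hL : Tendsto (fun i => (L i : ℝ)) l atTop :=
    tendsto_atTop_mono' l (hlt.mono fun i h => h.2.le) (tendsto_natCast_atTop_atTop.comp hp)
  have hρ0 : 0 < ρ := one_pos.trans h1
  have hlim := ((tendsto_rpow_atTop (sub_pos.2 hα)).comp hL).atTop_mul_pos
    (mul_pos hc (inv_pos.2 hρ0)) ((hρ.inv₀ hρ0.ne').const_mul c)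
  refine tendsto_atTop_mono' l ?_ hlim
  filter_upwards [ha, hlt] with i hi ⟨hpos, hpL⟩
  have hL0 : (0 : ℝ) < L i := hpos.trans hpL
  have hterm : ∀ k ∈ Finset.range (p i),
      c / (L i : ℝ) ^ α ≤ a i k / ((L i : ℝ) - k) ^ α := fun k hk => by
    have hk' := Finset.mem_range.1 hk
    have hgap : 0 < (L i : ℝ) - k := sub_pos.2 ((Nat.cast_le.2 hk'.le).trans_lt hpL)
    have hpow : ((L i : ℝ) - k) ^ α ≤ (L i : ℝ) ^ α :=
      Real.rpow_le_rpow hgap.le (sub_le_self _ (Nat.cast_nonneg k)) hα0.le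
    exact div_le_div₀ (hc.le.trans (hi k hk')) (hi k hk') (Real.rpow_pos_of_pos hgap α) hpow
  refine le_trans (le_of_eq ?_) (Finset.card_nsmul_le_sum _ _ _ hterm)
  rw [Finset.card_range, nsmul_eq_mul, Function.comp_apply, Real.rpow_sub hL0, Real.rpow_one]
  field_simp

end HarmonicSums

section LengthProfile

/-- `v` records the relative growth of the letters under `H`:
`|H^m(a)| / |H^m(b)| → v a / v b`. For primitive `H` it is a Perron eigenvector. -/
structure IsLengthProfile (H : A → List A) (v : A → ℝ) : Prop where
  pos : ∀ a, 0 < v a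
  tendsto_div : ∀ a b, Tendsto
    (fun m => ((substPow H m a).length : ℝ) / (substPow H m b).length) atTop (𝓝 (v a / v b))

theorem exists_tendsto_div_of_quasi_multiplicative {ι : Type*} [Nonempty ι] {P : ℕ → ι → ℝ}
    (hP : ∀ m a, 0 < P m a) {s : ℕ → ℝ} (hs : ∀ k, 0 < s k)
    (h : ∀ η > 0, ∃ M, ∀ m ≥ M, ∀ k a, |P (k + m) a / (P m a * s k) - 1| ≤ η) :
    ∃ v : ι → ℝ, (∀ a, 0 < v a) ∧
      ∀ a b, Tendsto (fun m => P m a / P m b) atTop (𝓝 (v a / v b)) := by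
  obtain ⟨a₀⟩ := ‹Nonempty ι›
  let D (a : ι) (m : ℕ) : ℝ := Real.log (P m a) - Real.log (P m a₀)
  have hcauchy : ∀ a, CauchySeq (D a) := fun a => by
    rw [Metric.cauchySeq_iff']
    intro ε hε
    have hlog : ∀ᶠ t in 𝓝 (1 : ℝ), |Real.log t| < ε / 2 := by
      have hlim := (Real.continuousAt_log one_ne_zero).tendsto.abs
      rw [Real.log_one, abs_zero] at hlim
      exact hlim.eventually (gt_mem_nhds (half_pos hε))
    obtain ⟨η, hη, hηlog⟩ := Metric.eventually_nhds_iff.1 hlog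
    obtain ⟨M, hM⟩ := h (η / 2) (half_pos hη)
    have hclose : ∀ k c,
        |Real.log (P (k + M) c) - Real.log (P M c) - Real.log (s k)| < ε / 2 := fun k c => by
      have := hηlog ((hM M le_rfl k c).trans_lt (half_lt_self hη))
      rwa [Real.log_div (hP _ _).ne' (mul_pos (hP _ _) (hs k)).ne',
        Real.log_mul (hP _ _).ne' (hs k).ne', ← sub_sub] at this
    refine ⟨M, fun n hn => ?_⟩
    obtain ⟨k, rfl⟩ := Nat.exists_eq_add_of_le' hn
    have ha := abs_lt.1 (hclose k a)
    have ha₀ := abs_lt.1 (hclose k a₀)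
    rw [Real.dist_eq, abs_lt]
    constructor <;> simp only [D] <;> linarith
  choose t ht using fun a => cauchySeq_tendsto_of_complete (hcauchy a)
  refine ⟨fun a => Real.exp (t a), fun a => Real.exp_pos _, fun a b => ?_⟩
  rw [← Real.exp_sub]
  refine ((Real.continuous_exp.tendsto _).comp ((ht a).sub (ht b))).congr fun m => ?_
  simp only [Function.comp_apply, D]
  rw [sub_sub_sub_cancel_right, Real.exp_sub, Real.exp_log (hP _ _), Real.exp_log (hP _ _)]

theorem PrimitiveSubst.exists_length_le_mul [Finite A] {H : A → List A} (hne : ∀ a, H a ≠ [])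
    (hprim : PrimitiveSubst H) :
    ∃ C, ∀ m a b, (substPow H m b).length ≤ C * (substPow H m a).length := by
  obtain ⟨k, -, hk⟩ := hprim
  obtain ⟨M, hM⟩ := exists_length_le (substPow H k)
  refine ⟨M, fun m a b => (length_substPow_le_of_forall_mem hne hk m a b).trans ?_⟩
  rw [add_comm m k, length_substPow_add hne k m fun _ => a, mul_comm]
  exact blockStart_le_mul hM _ _

theorem PrimitiveSubst.prefixWord_one_mem_Lang [Finite A] {H : A → List A} (hne : ∀ a, H a ≠ [])
    (hprim : PrimitiveSubst H) {u : ℕ → A} (hu : IsFixedPointSubst H u) (x : ℕ → A) :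
    prefixWord x 1 ∈ Lang u := by
  obtain ⟨R, hR⟩ := hprim.exists_letter_recurrence hne hu
  obtain ⟨s, -, hs⟩ := hR 0 (x 0)
  exact prefixWord_mem_Lang_iff.2 ⟨0 + s, fun i hi => by
    rw [Nat.lt_one_iff.1 hi, add_zero, hs]⟩

variable [TopologicalSpace A] [DiscreteTopology A]

theorem continuous_comp_apply_zero (f : A → ℝ) : Continuous fun y : ℕ → A => f (y 0) :=
  (continuous_of_discreteTopology (f := f)).comp (continuous_apply 0)

variable [Finite A] [MeasurableSpace A] [BorelSpace A]

theorem integrable_comp_apply_zero (μ : Measure (ℕ → A)) [IsFiniteMeasure μ] (f : A → ℝ) :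
    Integrable (fun y : ℕ → A => f (y 0)) μ :=
  (continuous_comp_apply_zero f).integrable_of_hasCompactSupport
    (HasCompactSupport.of_compactSpace _)

variable {μ : Measure (ℕ → A)}

theorem IsUniqueInvariantMeasureOn.abs_sum_letters_sub_le [IsFiniteMeasure μ] {u : ℕ → A}
    (hμ : IsUniqueInvariantMeasureOn shift (orbitClosure u) μ) {ε : ℝ} (hε : 0 < ε) :
    ∃ C, ∀ (f : A → ℝ) (B : ℝ), (∀ b, |f b| ≤ B) → ∀ (z : ℕ → A) (n : ℕ),
      prefixWord z n ∈ Lang u →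
        |∑ i ∈ Finset.range n, f (z i) - n * ∫ y, f (y 0) ∂μ| ≤ B * (ε * n + C) := by
  classical
  have := Fintype.ofFinite A
  have : Nonempty A := ⟨u 0⟩
  let I (b a : A) : ℝ := if a = b then 1 else 0
  have hexpand : ∀ (f : A → ℝ) a, f a = ∑ b, f b * I b a := fun f a => by simp [I]
  have hcard : (0 : ℝ) < Fintype.card A := Nat.cast_pos.2 Fintype.card_pos
  choose C hC using fun b => hμ.abs_birkhoffSum_sub_le_of_mem_Lang
    (continuous_comp_apply_zero (I b)) (div_pos hε hcard)
  refine ⟨∑ b, C b, fun f B hB z n hz => ?_⟩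
  have hsum : ∑ i ∈ Finset.range n, f (z i)
      = ∑ b, f b * birkhoffSum shift (fun y => I b (y 0)) n z := by
    simp only [birkhoffSum, shift_iterate_apply, add_zero, Finset.mul_sum]
    rw [Finset.sum_comm]
    exact Finset.sum_congr rfl fun i _ => hexpand f (z i)
  have hint : ∫ y, f (y 0) ∂μ = ∑ b, f b * ∫ y, I b (y 0) ∂μ := by
    simp only [← integral_const_mul]
    rw [← integral_finsetSum _ fun b _ => (integrable_comp_apply_zero μ (I b)).const_mul (f b)]
    exact integral_congr_ae (ae_of_all _ fun y => hexpand f (y 0))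
  calc |∑ i ∈ Finset.range n, f (z i) - n * ∫ y, f (y 0) ∂μ|
      = |∑ b, f b * (birkhoffSum shift (fun y => I b (y 0)) n z - n * ∫ y, I b (y 0) ∂μ)| := by
        simp only [hsum, hint, Finset.mul_sum, mul_sub, Finset.sum_sub_distrib, mul_left_comm]
    _ ≤ ∑ b, B * (ε / Fintype.card A * n + C b) := by
        refine (Finset.abs_sum_le_sum_abs _ _).trans (Finset.sum_le_sum fun b _ => ?_)
        rw [abs_mul]
        exact mul_le_mul (hB b) (hC b z n hz) (abs_nonneg _) ((abs_nonneg _).trans (hB b))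
    _ = B * (ε * n + ∑ b, C b) := by
        rw [← Finset.mul_sum, Finset.sum_add_distrib, Finset.sum_const, Finset.card_univ,
          nsmul_eq_mul]
        field_simp

/-- The mean of `|H^k(a)|` when the letter `a` is drawn according to `μ`. -/
noncomputable def meanLength (H : A → List A) (μ : Measure (ℕ → A)) (k : ℕ) : ℝ :=
  ∫ y, ((substPow H k (y 0)).length : ℝ) ∂μ

variable [IsProbabilityMeasure μ] {H : A → List A}

theorem meanLength_pos (hne : ∀ a, H a ≠ []) (k : ℕ) : 0 < meanLength H μ k := by
  have hone : (1 : ℝ) ≤ meanLength H μ k := by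
    simpa [meanLength] using integral_mono (integrable_const (μ := μ) (1 : ℝ))
      (integrable_comp_apply_zero μ fun a => ((substPow H k a).length : ℝ))
      fun y => Nat.one_le_cast.2 (List.length_pos_iff.2 (substPow_ne_nil hne k (y 0)))
  exact one_pos.trans_le hone

theorem length_le_mul_meanLength {C : ℕ}
    (hC : ∀ m a b, (substPow H m b).length ≤ C * (substPow H m a).length) (k : ℕ) (b : A) :
    ((substPow H k b).length : ℝ) ≤ C * meanLength H μ k := by
  have hle : ∀ y : ℕ → A,
      ((substPow H k b).length : ℝ) ≤ C * ((substPow H k (y 0)).length : ℝ) := fun y => by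
    exact_mod_cast hC k (y 0) b
  have hint := integrable_comp_apply_zero μ fun a => ((substPow H k a).length : ℝ)
  simpa [meanLength, integral_const_mul] using
    integral_mono (integrable_const (μ := μ) ((substPow H k b).length : ℝ))
      (hint.const_mul (C : ℝ)) hle

theorem exists_abs_length_div_sub_one_le [Nontrivial A] (hne : ∀ a, H a ≠ [])
    (hprim : PrimitiveSubst H) {u : ℕ → A} (hu : IsFixedPointSubst H u)
    (hμ : IsUniqueInvariantMeasureOn shift (orbitClosure u) μ) {η : ℝ} (hη : 0 < η) :
    ∃ M, ∀ m ≥ M, ∀ k a, |((substPow H (k + m) a).length : ℝ) /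
      ((substPow H m a).length * meanLength H μ k) - 1| ≤ η := by
  obtain ⟨C, hC⟩ := hprim.exists_length_le_mul hne
  set ε := η / (2 * (C + 1)) with hεdef
  have hε : 0 < ε := by positivity
  obtain ⟨E, hE⟩ := hμ.abs_sum_letters_sub_le hε
  obtain ⟨n, hn⟩ := exists_nat_ge (E / ε)
  obtain ⟨M, hM⟩ := hprim.exists_forall_le_length hne n
  refine ⟨M, fun m hm k a => ?_⟩
  have hs := meanLength_pos (μ := μ) hne k
  have hlen : (0 : ℝ) < (substPow H m a).length :=
    Nat.cast_pos.2 (List.length_pos_iff.2 (substPow_ne_nil hne m a))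
  have hElen : E ≤ ε * (substPow H m a).length :=
    (div_le_iff₀' hε).1 (hn.trans (Nat.cast_le.2 (hM m hm a)))
  have hlegal : prefixWord ((substSeq H)^[m] fun _ => a) (substPow H m a).length ∈ Lang u := by
    have h := prefixWord_iterate_mem_Lang hne hu
      (hprim.prefixWord_one_mem_Lang hne hu fun _ => a) m
    rwa [blockStart_one] at h
  have hdev := hE (fun b => ((substPow H k b).length : ℝ)) (C * meanLength H μ k)
    (fun b => by rw [Nat.abs_cast]; exact length_le_mul_meanLength hC k b) _ _ hlegal
  rw [length_substPow_add hne k m fun _ => a, div_sub_one (mul_pos hlen hs).ne', abs_div,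
    abs_of_pos (mul_pos hlen hs), div_le_iff₀ (mul_pos hlen hs), blockStart]
  push_cast
  calc _ ≤ C * meanLength H μ k * (ε * (substPow H m a).length + E) := hdev
    _ ≤ C * meanLength H μ k * (ε * (substPow H m a).length + ε * (substPow H m a).length) := by
        gcongr
    _ = (C / (C + 1)) * (η * ((substPow H m a).length * meanLength H μ k)) := by
        rw [hεdef]; field_simp; ring
    _ ≤ η * ((substPow H m a).length * meanLength H μ k) :=
        mul_le_of_le_one_left (by positivity) (div_le_one_of_le₀ (by linarith) (by positivity))

theorem exists_isLengthProfile [Nontrivial A] (hne : ∀ a, H a ≠ []) (hprim : PrimitiveSubst H)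
    {u : ℕ → A} (hu : IsFixedPointSubst H u)
    (hμ : IsUniqueInvariantMeasureOn shift (orbitClosure u) μ) : ∃ v, IsLengthProfile H v := by
  obtain ⟨v, hpos, hlim⟩ := exists_tendsto_div_of_quasi_multiplicative
    (P := fun m a => ((substPow H m a).length : ℝ))
    (fun m a => Nat.cast_pos.2 (List.length_pos_iff.2 (substPow_ne_nil hne m a)))
    (meanLength_pos (μ := μ) hne) fun η hη => exists_abs_length_div_sub_one_le hne hprim hu hμ hη
  exact ⟨v, hpos, hlim⟩

end LengthProfile

section DeltaScaling

variable [TopologicalSpace A] [DiscreteTopology A] {H : A → List A} {u z : ℕ → A}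

theorem shift_iterate_substSeq_mem_orbitClosure (hne : ∀ a, H a ≠ [])
    (hu : IsFixedPointSubst H u) (hz : z ∈ orbitClosure u) (m k : ℕ) :
    shift^[k] ((substSeq H)^[m] z) ∈ orbitClosure u :=
  mem_orbitClosure_iff.2 fun n => prefixWord_shift_mem_Lang <| prefixWord_mem_Lang_of_le
    (prefixWord_iterate_mem_Lang hne hu (mem_orbitClosure_iff.1 hz (k + n)) m)
    (le_blockStart (substPow_ne_nil hne m) z _)

theorem DesubstBound.mapsTo_substSeq_compl_orbitClosure {l : ℕ} (hne : ∀ a, H a ≠ [])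
    (hl : DesubstBound H u l) :
    Set.MapsTo (substSeq H) (orbitClosure u)ᶜ (orbitClosure u)ᶜ := fun z hz hmem => by
  obtain ⟨j, hj, hlt⟩ := hl z 0 (max l (blockStart H z (delta u z) + 1))
    (List.length_pos_iff.2 (hne _)) (le_max_left _ _) (mem_orbitClosure_iff.1 hmem _)
  have hjδ := blockStart_monotone H z ((isGreatest_delta hz).2 hj)
  omega

theorem TwoFull.two_le_delta (hfull : TwoFull H u) (hz : z ∉ orbitClosure u) : 2 ≤ delta u z :=
  (isGreatest_delta hz).2 (hfull _ (length_prefixWord z 2))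

theorem TwoFull.length_substPow_lt_blockStart_delta (hfull : TwoFull H u) (hne : ∀ a, H a ≠ [])
    (hz : z ∉ orbitClosure u) (m : ℕ) :
    (substPow H m (z 0)).length < blockStart (substPow H m) z (delta u z) :=
  blockStart_one (substPow H m) z ▸
    blockStart_strictMono (substPow_ne_nil hne m) z (hfull.two_le_delta hz)

/-- Substituting multiplies the maximal legal prefix of `z` exactly: along the image of the first
letter of `z` under `H^m`, the maximal legal prefix always ends where the image of the first
`δ(z)` letters of `z` does. -/
def DeltaScales (H : A → List A) (u z : ℕ → A) : Prop :=
  ∀ m k, k < (substPow H m (z 0)).length →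
    shift^[k] ((substSeq H)^[m] z) ∉ orbitClosure u ∧
      k + delta u (shift^[k] ((substSeq H)^[m] z)) = blockStart (substPow H m) z (delta u z)

theorem DesubstBound.deltaScales {l : ℕ} (hne : ∀ a, H a ≠ []) (hu : IsFixedPointSubst H u)
    (hfull : TwoFull H u) (hl : DesubstBound H u l) (hlegal : IteratesLocallyLegal H u l z)
    (hz : z ∉ orbitClosure u) : DeltaScales H u z := fun m k hk => by
  set y := shift^[k] ((substSeq H)^[m] z)
  have hlt := hfull.length_substPow_lt_blockStart_delta hne hz m
  have hlower : prefixWord y (blockStart (substPow H m) z (delta u z) - k) ∈ Lang u :=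
    prefixWord_shift_mem_Lang <| prefixWord_mem_Lang_of_le
      (prefixWord_iterate_mem_Lang hne hu (isGreatest_delta hz).1 m) (by omega)
  have hupper : ∀ n, prefixWord y n ∈ Lang u →
      k + n ≤ blockStart (substPow H m) z (delta u z) := fun n hn => by
    have hmax : prefixWord y (max l n) ∈ Lang u := by
      rcases le_total l n with h | h
      · rwa [max_eq_right h]
      · rw [max_eq_left h, ← factorAt_eq]
        exact hlegal m k
    obtain ⟨j, hj, hkj⟩ := hl.exists_prefix_mem_Lang hne hlegal hk (le_max_left l n) hmax
    have := blockStart_monotone (substPow H m) z ((isGreatest_delta hz).2 hj)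
    omega
  have hy : y ∉ orbitClosure u := fun hmem => by
    have := hupper _ (mem_orbitClosure_iff.1 hmem (blockStart (substPow H m) z (delta u z) + 1))
    omega
  have hle := hupper _ (isGreatest_delta hy).1
  have hge := (isGreatest_delta hy).2 hlower
  exact ⟨hy, by omega⟩

theorem DesubstBound.exists_forall_deltaScales [Finite A] [Nontrivial A] {l : ℕ}
    (hl : DesubstBound H u l) (hne : ∀ a, H a ≠ []) (hprim : PrimitiveSubst H)
    (hu : IsFixedPointSubst H u) (hfull : TwoFull H u) :
    ∃ N, ∀ x j, shift^[j] ((substSeq H)^[N] x) ∉ orbitClosure u →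
      DeltaScales H u (shift^[j] ((substSeq H)^[N] x)) := by
  obtain ⟨N, hN⟩ := hprim.exists_forall_le_length hne l
  exact ⟨N, fun x j => hl.deltaScales hne hu hfull
    (iteratesLocallyLegal_of_length_le hne hu hfull hN x j)⟩

end DeltaScaling

section PointwiseLimits

variable {H : A → List A} {u z : ℕ → A}

/-- The limit `ρ` of `|H^m(z_0 ⋯ z_{δ(z)-1})| / |H^m(z_0)|`, where `v` is the length profile
of `H`. -/
noncomputable def limitRatio (v : A → ℝ) (u z : ℕ → A) : ℝ :=
  (∑ i ∈ Finset.range (delta u z), v (z i)) / v (z 0)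

theorem IsLengthProfile.tendsto_limitRatio {v : A → ℝ} (hv : IsLengthProfile H v) (u z : ℕ → A) :
    Tendsto (fun m => (blockStart (substPow H m) z (delta u z) : ℝ) /
      (substPow H m (z 0)).length) atTop (𝓝 (limitRatio v u z)) := by
  simp only [limitRatio, blockStart, Nat.cast_sum, Finset.sum_div]
  exact tendsto_finsetSum _ fun i _ => hv.tendsto_div (z i) (z 0)

variable [TopologicalSpace A]

/-- The potential `V = G / δ^α` off `K`, extended by `0` on `K`. -/
noncomputable def deltaPotential (u : ℕ → A) (α : ℝ) (G : (ℕ → A) → ℝ) : (ℕ → A) → ℝ :=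
  (orbitClosure u)ᶜ.indicator fun y => G y / (delta u y : ℝ) ^ α

theorem DeltaScales.renorm_iterate_deltaPotential (hz : DeltaScales H u z) (hne : ∀ a, H a ≠ [])
    (α : ℝ) (G : (ℕ → A) → ℝ) (m : ℕ) :
    (renorm H)^[m] (deltaPotential u α G) z =
      ∑ k ∈ Finset.range (substPow H m (z 0)).length, G (shift^[k] ((substSeq H)^[m] z)) /
        ((blockStart (substPow H m) z (delta u z) : ℝ) - k) ^ α := by
  rw [renorm_iterate_apply hne]
  refine Finset.sum_congr rfl fun k hk => ?_
  obtain ⟨hmem, hδ⟩ := hz m k (Finset.mem_range.1 hk)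
  rw [deltaPotential, Set.indicator_of_mem (Set.mem_compl hmem), ← hδ, Nat.cast_add,
    add_sub_cancel_left]

/-- The limit of `R^m V` at the points where `δ` scales, for `V = 1/δ`. -/
noncomputable def localLimit (v : A → ℝ) (u : ℕ → A) : (ℕ → A) → ℝ :=
  (orbitClosure u)ᶜ.indicator fun z => Real.log (limitRatio v u z / (limitRatio v u z - 1))

theorem localLimit_of_mem (v : A → ℝ) (hz : z ∈ orbitClosure u) : localLimit v u z = 0 :=
  Set.indicator_of_notMem (not_not.2 hz) _

theorem localLimit_of_notMem (v : A → ℝ) (hz : z ∉ orbitClosure u) :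
    localLimit v u z = Real.log (limitRatio v u z / (limitRatio v u z - 1)) :=
  Set.indicator_of_mem hz _

variable [DiscreteTopology A]

theorem renorm_iterate_deltaPotential_of_mem (hne : ∀ a, H a ≠ []) (hu : IsFixedPointSubst H u)
    (hz : z ∈ orbitClosure u) (α : ℝ) (G : (ℕ → A) → ℝ) (m : ℕ) :
    (renorm H)^[m] (deltaPotential u α G) z = 0 := by
  rw [renorm_iterate_apply hne]
  exact Finset.sum_eq_zero fun k _ => Set.indicator_of_notMem
    (not_not.2 (shift_iterate_substSeq_mem_orbitClosure hne hu hz m k)) _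

theorem TwoFull.one_lt_limitRatio (hfull : TwoFull H u) {v : A → ℝ} (hv : ∀ a, 0 < v a)
    (hz : z ∉ orbitClosure u) : 1 < limitRatio v u z := by
  have hδ := hfull.two_le_delta hz
  exact (one_lt_div (hv _)).2 <| Finset.single_lt_sum (f := fun i => v (z i)) one_ne_zero
    (Finset.mem_range.2 (by omega)) (Finset.mem_range.2 (by omega)) (hv _) fun i _ _ => (hv _).le

variable [Finite A] [Nontrivial A] {v : A → ℝ} {α : ℝ} {G : (ℕ → A) → ℝ}

theorem tendsto_renorm_iterate_deltaPotential_one_of_deltaScales [MeasurableSpace A] [BorelSpace A]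
    {μ : Measure (ℕ → A)} (hμ : IsUniqueInvariantMeasureOn shift (orbitClosure u) μ)
    (hne : ∀ a, H a ≠ []) (hprim : PrimitiveSubst H) (hu : IsFixedPointSubst H u)
    (hfull : TwoFull H u) (hv : IsLengthProfile H v)
    (hscale : z ∉ orbitClosure u → DeltaScales H u z) (hG : Continuous G) :
    Tendsto (fun m => (renorm H)^[m] (deltaPotential u 1 G) z) atTop
      (𝓝 ((∫ y, G y ∂μ) * localLimit v u z)) := by
  by_cases hz : z ∈ orbitClosure u
  · simp only [renorm_iterate_deltaPotential_of_mem hne hu hz, localLimit_of_mem v hz,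
      mul_zero, tendsto_const_nhds]
  simp only [(hscale hz).renorm_iterate_deltaPotential hne, Real.rpow_one,
    localLimit_of_notMem v hz]
  refine tendsto_sum_div_sub (hprim.tendsto_length_substPow hne (z 0))
    (hv.tendsto_limitRatio u z) (hfull.one_lt_limitRatio hv.pos hz) fun ε hε => ?_
  obtain ⟨C, hC⟩ := hμ.abs_birkhoffSum_sub_le_of_mem_Lang hG hε
  refine ⟨C, fun m n hn => hC _ n ?_⟩
  exact prefixWord_mem_Lang_of_le (prefixWord_iterate_mem_Lang hne hu (isGreatest_delta hz).1 m)
    (hn.trans (hfull.length_substPow_lt_blockStart_delta hne hz m).le)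

theorem tendsto_renorm_iterate_deltaPotential_zero_of_deltaScales (hne : ∀ a, H a ≠ [])
    (hprim : PrimitiveSubst H) (hu : IsFixedPointSubst H u) (hfull : TwoFull H u)
    (hv : IsLengthProfile H v) (hscale : z ∉ orbitClosure u → DeltaScales H u z)
    (hG : Continuous G) (hα : 1 < α) :
    Tendsto (fun m => (renorm H)^[m] (deltaPotential u α G) z) atTop (𝓝 0) := by
  by_cases hz : z ∈ orbitClosure u
  · simp only [renorm_iterate_deltaPotential_of_mem hne hu hz, tendsto_const_nhds]
  obtain ⟨B, -, hB⟩ := exists_norm_le_of_continuous hG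
  simp only [(hscale hz).renorm_iterate_deltaPotential hne]
  exact tendsto_sum_div_sub_rpow_zero (hprim.tendsto_length_substPow hne (z 0))
    (hv.tendsto_limitRatio u z) (hfull.one_lt_limitRatio hv.pos hz) hα fun m k => hB _

theorem tendsto_renorm_iterate_deltaPotential_atTop_of_deltaScales (hne : ∀ a, H a ≠ [])
    (hprim : PrimitiveSubst H) (hu : IsFixedPointSubst H u) (hfull : TwoFull H u)
    (hv : IsLengthProfile H v) (hz : z ∉ orbitClosure u) (hscale : DeltaScales H u z)
    (hG : Continuous G) (hpos : ∀ y ∈ orbitClosure u, 0 < G y) (hα0 : 0 < α) (hα : α < 1) :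
    Tendsto (fun m => (renorm H)^[m] (deltaPotential u α G) z) atTop atTop := by
  have hp := hprim.tendsto_length_substPow hne (z 0)
  have hρ := hv.tendsto_limitRatio u z
  have h1 := hfull.one_lt_limitRatio hv.pos hz
  obtain ⟨c, hc, n, hn⟩ := exists_forall_le_of_prefixWord_mem_Lang hG hpos
  simp only [hscale.renorm_iterate_deltaPotential hne]
  refine tendsto_sum_div_sub_rpow_atTop hp hρ h1 hα0 hα hc ?_
  filter_upwards [(tendsto_sub_atTop_of_tendsto_div hp hρ h1).eventually_ge_atTop (n : ℝ)]
    with m hm k hk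
  have hle : (substPow H m (z 0)).length + n ≤ blockStart (substPow H m) z (delta u z) := by
    exact_mod_cast (le_sub_iff_add_le'.1 hm)
  exact hn _ <| prefixWord_shift_mem_Lang <| prefixWord_mem_Lang_of_le
    (prefixWord_iterate_mem_Lang hne hu (isGreatest_delta hz).1 m) (by omega)

end PointwiseLimits

section LocalLimit

variable [TopologicalSpace A] [DiscreteTopology A] {H : A → List A} {u z z' : ℕ → A} {v : A → ℝ}

theorem notMem_orbitClosure_and_delta_eq (hz : z ∉ orbitClosure u)
    (h : ∀ i < delta u z + 1, z i = z' i) : z' ∉ orbitClosure u ∧ delta u z' = delta u z := by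
  have hgreatest : IsGreatest {n | prefixWord z' n ∈ Lang u} (delta u z) := by
    refine ⟨?_, fun n hn => not_lt.1 fun hlt => ?_⟩
    · rw [Set.mem_ofPred_eq, ← prefixWord_eq_iff.2 fun i hi => h i (Nat.lt_succ_of_lt hi)]
      exact (isGreatest_delta hz).1
    · have hmem := prefixWord_mem_Lang_of_le hn (Nat.succ_le_of_lt hlt)
      rw [← prefixWord_eq_iff.2 h] at hmem
      exact (Nat.lt_succ_self _).not_ge ((isGreatest_delta hz).2 hmem)
  have hz' : z' ∉ orbitClosure u := fun hmem =>
    (Nat.lt_succ_self _).not_ge (hgreatest.2 (mem_orbitClosure_iff.1 hmem _))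
  exact ⟨hz', (isGreatest_delta hz').unique hgreatest⟩

theorem localLimit_congr (hz : z ∉ orbitClosure u) (h : ∀ i < delta u z + 1, z i = z' i) :
    localLimit v u z' = localLimit v u z := by
  obtain ⟨hz', hδ⟩ := notMem_orbitClosure_and_delta_eq hz h
  have hsum : ∑ i ∈ Finset.range (delta u z), v (z i) =
      ∑ i ∈ Finset.range (delta u z), v (z' i) :=
    Finset.sum_congr rfl fun i hi => by rw [h i (Nat.lt_succ_of_lt (Finset.mem_range.1 hi))]
  simp only [localLimit_of_notMem v hz, localLimit_of_notMem v hz', limitRatio, hδ, hsum,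
    h 0 (Nat.succ_pos _)]

theorem delta_sub_one_le_mul_limitRatio_sub_one (hfull : TwoFull H u) (hv : ∀ a, 0 < v a) {C : ℝ}
    (hC : ∀ a b, v a / v b ≤ C) (hz : z ∉ orbitClosure u) :
    (delta u z : ℝ) - 1 ≤ C * (limitRatio v u z - 1) := by
  obtain ⟨d, hd⟩ := Nat.exists_eq_add_of_le' (one_le_two.trans (hfull.two_le_delta hz))
  have hsplit : limitRatio v u z - 1 = ∑ i ∈ Finset.range d, v (z (i + 1)) / v (z 0) := by
    rw [limitRatio, hd, Finset.sum_range_succ', add_div, div_self (hv _).ne',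
      add_sub_cancel_right, Finset.sum_div]
  rw [hsplit, hd, Finset.mul_sum]
  have hterm : ∀ i ∈ Finset.range d, 1 ≤ C * (v (z (i + 1)) / v (z 0)) := fun i _ => by
    rw [← div_le_iff₀ (div_pos (hv _) (hv _)), one_div_div]
    exact hC _ _
  simpa using Finset.card_nsmul_le_sum _ _ _ hterm

theorem abs_log_div_sub_one_le {ρ : ℝ} (h : 1 < ρ) : |Real.log (ρ / (ρ - 1))| ≤ (ρ - 1)⁻¹ := by
  have hpos : 0 < ρ - 1 := sub_pos.2 h
  have hone : ρ / (ρ - 1) = 1 + (ρ - 1)⁻¹ := by field_simp; ring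
  rw [hone, abs_of_nonneg (Real.log_nonneg (by linarith [inv_pos.2 hpos]))]
  linarith [Real.log_le_sub_one_of_pos (x := 1 + (ρ - 1)⁻¹) (by positivity)]

theorem mul_abs_localLimit_le (hfull : TwoFull H u) (hv : ∀ a, 0 < v a) {C : ℝ}
    (hC : ∀ a b, v a / v b ≤ C) {n : ℕ} (hz : prefixWord z (n + 1) ∈ Lang u) :
    n * |localLimit v u z| ≤ C := by
  by_cases hK : z ∈ orbitClosure u
  · have hC0 : 0 ≤ C := (div_pos (hv (u 0)) (hv (u 0))).le.trans (hC _ _)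
    simpa [localLimit_of_mem v hK] using hC0
  have hpos : 0 < limitRatio v u z - 1 := sub_pos.2 (hfull.one_lt_limitRatio hv hK)
  have hδ : ((n + 1 : ℕ) : ℝ) ≤ delta u z := Nat.cast_le.2 ((isGreatest_delta hK).2 hz)
  rw [localLimit_of_notMem v hK]
  calc n * |Real.log (limitRatio v u z / (limitRatio v u z - 1))|
      ≤ n * (limitRatio v u z - 1)⁻¹ := by
        gcongr
        exact abs_log_div_sub_one_le (hfull.one_lt_limitRatio hv hK)
    _ ≤ C := by
        rw [← div_eq_mul_inv, div_le_iff₀ hpos]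
        push_cast at hδ
        linarith [delta_sub_one_le_mul_limitRatio_sub_one hfull hv hC hK]

theorem continuous_localLimit [Finite A] (hfull : TwoFull H u) (hv : ∀ a, 0 < v a) :
    Continuous (localLimit v u) := by
  refine continuous_iff_continuousAt.2 fun z => ?_
  have hcylinder : ∀ n, ∀ᶠ z' in 𝓝 z, ∀ i < n, z' i = z i := fun n =>
    (PiNat.isOpen_cylinder (fun _ => A) z n).mem_nhds (PiNat.self_mem_cylinder z n)
  by_cases hz : z ∈ orbitClosure u
  · have : Nonempty (A × A) := ⟨(u 0, u 0)⟩
    obtain ⟨⟨a, b⟩, hmax⟩ := Finite.exists_max fun q : A × A => v q.1 / v q.2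
    rw [ContinuousAt, localLimit_of_mem v hz, Metric.tendsto_nhds]
    intro ε hε
    obtain ⟨n, hn⟩ := exists_nat_gt (v a / v b / ε)
    filter_upwards [hcylinder (n + 1)] with z' hz'
    have hlegal : prefixWord z' (n + 1) ∈ Lang u :=
      prefixWord_eq_iff.2 hz' ▸ mem_orbitClosure_iff.1 hz (n + 1)
    have hle := mul_abs_localLimit_le hfull hv (fun c d => hmax (c, d)) hlegal
    have hn0 : (0 : ℝ) < n := (div_pos (div_pos (hv a) (hv b)) hε).trans hn
    rw [Real.dist_0_eq_abs]
    exact lt_of_mul_lt_mul_left (hle.trans_lt ((div_lt_iff₀ hε).1 hn)) hn0.le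
  · refine (continuousAt_const (y := localLimit v u z)).congr ?_
    filter_upwards [hcylinder (delta u z + 1)] with z' hz'
    exact (localLimit_congr hz fun i hi => (hz' i hi).symm).symm

end LocalLimit

section RenormLimits

variable {H : A → List A}

theorem tendsto_renorm {ι : Type*} {l : Filter ι} {F : ι → (ℕ → A) → ℝ} {G : (ℕ → A) → ℝ}
    {x : ℕ → A} (h : ∀ k, Tendsto (fun i => F i (shift^[k] (substSeq H x))) l
      (𝓝 (G (shift^[k] (substSeq H x))))) :
    Tendsto (fun i => renorm H (F i) x) l (𝓝 (renorm H G x)) :=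
  tendsto_finsetSum _ fun k _ => h k

theorem renorm_eq_self_of_tendsto {U V : (ℕ → A) → ℝ}
    (h : ∀ x, Tendsto (fun m => (renorm H)^[m] V x) atTop (𝓝 (U x))) : renorm H U = U :=
  funext fun x => by
    refine tendsto_nhds_unique (tendsto_renorm fun k => h _)
      (((tendsto_add_atTop_iff_nat 1).2 (h x)).congr fun m => ?_)
    rw [Function.iterate_succ_apply']

theorem tendsto_renorm_iterate_of_shift_iterate (hne : ∀ a, H a ≠ []) {V F : (ℕ → A) → ℝ} {N : ℕ}
    {x : ℕ → A} (h : ∀ k, Tendsto (fun m => (renorm H)^[m] V (shift^[k] ((substSeq H)^[N] x)))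
      atTop (𝓝 (F (shift^[k] ((substSeq H)^[N] x))))) :
    Tendsto (fun m => (renorm H)^[m] V x) atTop (𝓝 ((renorm H)^[N] F x)) := by
  rw [← substSeq_substPow hne] at h
  rw [← tendsto_add_atTop_iff_nat N, ← renorm_substPow hne]
  refine (tendsto_renorm h).congr fun m => ?_
  rw [renorm_substPow hne, ← Function.iterate_add_apply, add_comm]

theorem tendsto_renorm_iterate_atTop_of_shift_iterate (hne : ∀ a, H a ≠ []) {V : (ℕ → A) → ℝ}
    {N : ℕ} {x : ℕ → A}
    (h : Tendsto (fun m => (renorm H)^[m] V ((substSeq H)^[N] x)) atTop atTop)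
    (hnonneg : ∀ k, ∀ᶠ m in atTop, 0 ≤ (renorm H)^[m] V (shift^[k] ((substSeq H)^[N] x))) :
    Tendsto (fun m => (renorm H)^[m] V x) atTop atTop := by
  rw [← tendsto_add_atTop_iff_nat N]
  refine tendsto_atTop_mono' _ ?_ h
  filter_upwards [(eventually_all_finset (Finset.range (substPow H N (x 0)).length)).2
    fun k _ => hnonneg k] with m hm
  rw [add_comm, Function.iterate_add_apply, renorm_iterate_apply hne _ N]
  exact Finset.single_le_sum hm
    (Finset.mem_range.2 (List.length_pos_iff.2 (substPow_ne_nil hne N (x 0))))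

theorem renorm_zero : renorm H 0 = 0 := funext fun _ => Finset.sum_const_zero

theorem renorm_iterate_const_mul (hne : ∀ a, H a ≠ []) (c : ℝ) (F : (ℕ → A) → ℝ) (N : ℕ)
    (x : ℕ → A) : (renorm H)^[N] (fun z => c * F z) x = c * (renorm H)^[N] F x := by
  simp only [renorm_iterate_apply hne, birkhoffSum, Finset.mul_sum]

variable [TopologicalSpace A] [DiscreteTopology A]

theorem continuous_renorm (hne : ∀ a, H a ≠ []) {F : (ℕ → A) → ℝ} (hF : Continuous F) :
    Continuous (renorm H F) := by
  refine continuous_iff_continuousAt.2 fun x => ?_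
  have hsum : Continuous fun y =>
      ∑ i ∈ Finset.range (H (x 0)).length, F (shift^[i] (substSeq H y)) :=
    continuous_finsetSum _ fun i _ =>
      hF.comp ((continuous_shift.iterate i).comp (continuous_substSeq hne))
  refine hsum.continuousAt.congr ?_
  filter_upwards [(PiNat.isOpen_cylinder (fun _ => A) x 1).mem_nhds
    (PiNat.self_mem_cylinder x 1)] with y hy
  rw [renorm, hy 0 one_pos]

variable [Finite A] [Nontrivial A] {u x : ℕ → A} {v : A → ℝ} {α : ℝ} {G : (ℕ → A) → ℝ} {N : ℕ}

theorem tendsto_renorm_iterate_deltaPotential_one [MeasurableSpace A] [BorelSpace A]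
    {μ : Measure (ℕ → A)} (hμ : IsUniqueInvariantMeasureOn shift (orbitClosure u) μ)
    (hne : ∀ a, H a ≠ []) (hprim : PrimitiveSubst H) (hu : IsFixedPointSubst H u)
    (hfull : TwoFull H u) (hv : IsLengthProfile H v)
    (hN : ∀ x j, shift^[j] ((substSeq H)^[N] x) ∉ orbitClosure u →
      DeltaScales H u (shift^[j] ((substSeq H)^[N] x)))
    (hG : Continuous G) (x : ℕ → A) :
    Tendsto (fun m => (renorm H)^[m] (deltaPotential u 1 G) x) atTop
      (𝓝 ((∫ y, G y ∂μ) * (renorm H)^[N] (localLimit v u) x)) := by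
  rw [← renorm_iterate_const_mul hne]
  exact tendsto_renorm_iterate_of_shift_iterate hne fun k =>
    tendsto_renorm_iterate_deltaPotential_one_of_deltaScales hμ hne hprim hu hfull hv (hN x k) hG

theorem tendsto_renorm_iterate_deltaPotential_zero (hne : ∀ a, H a ≠ [])
    (hprim : PrimitiveSubst H) (hu : IsFixedPointSubst H u) (hfull : TwoFull H u)
    (hv : IsLengthProfile H v)
    (hN : ∀ j, shift^[j] ((substSeq H)^[N] x) ∉ orbitClosure u →
      DeltaScales H u (shift^[j] ((substSeq H)^[N] x)))
    (hG : Continuous G) (hα : 1 < α) :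
    Tendsto (fun m => (renorm H)^[m] (deltaPotential u α G) x) atTop (𝓝 0) := by
  have h := tendsto_renorm_iterate_of_shift_iterate (F := 0) hne fun k =>
    tendsto_renorm_iterate_deltaPotential_zero_of_deltaScales hne hprim hu hfull hv (hN k) hG hα
  rwa [Function.iterate_fixed renorm_zero] at h

theorem tendsto_renorm_iterate_deltaPotential_atTop (hne : ∀ a, H a ≠ [])
    (hprim : PrimitiveSubst H) (hu : IsFixedPointSubst H u) (hfull : TwoFull H u)
    (hv : IsLengthProfile H v)
    (hN : ∀ j, shift^[j] ((substSeq H)^[N] x) ∉ orbitClosure u →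
      DeltaScales H u (shift^[j] ((substSeq H)^[N] x)))
    (hx : (substSeq H)^[N] x ∉ orbitClosure u) (hG : Continuous G)
    (hpos : ∀ y ∈ orbitClosure u, 0 < G y) (hα0 : 0 < α) (hα : α < 1) :
    Tendsto (fun m => (renorm H)^[m] (deltaPotential u α G) x) atTop atTop := by
  have hlim : ∀ k, shift^[k] ((substSeq H)^[N] x) ∉ orbitClosure u →
      Tendsto (fun m => (renorm H)^[m] (deltaPotential u α G) (shift^[k] ((substSeq H)^[N] x)))
        atTop atTop := fun k hk =>
    tendsto_renorm_iterate_deltaPotential_atTop_of_deltaScales hne hprim hu hfull hv hk (hN k hk)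
      hG hpos hα0 hα
  refine tendsto_renorm_iterate_atTop_of_shift_iterate hne (hlim 0 hx) fun k => ?_
  by_cases hk : shift^[k] ((substSeq H)^[N] x) ∈ orbitClosure u
  · exact Eventually.of_forall fun m =>
      (renorm_iterate_deltaPotential_of_mem hne hu hk α G m).ge
  · exact (hlim k hk).eventually_ge_atTop 0

end RenormLimits

theorem eq_deltaPotential [TopologicalSpace A] {u : ℕ → A} {α : ℝ} {V G : (ℕ → A) → ℝ}
    (hK : ∀ y ∈ orbitClosure u, V y = 0)
    (hV : ∀ y ∉ orbitClosure u, V y = G y / (delta u y : ℝ) ^ α) : V = deltaPotential u α G := by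
  funext y
  by_cases hy : y ∈ orbitClosure u
  · rw [hK y hy, deltaPotential, Set.indicator_of_notMem (not_not.2 hy)]
  · rw [hV y hy, deltaPotential, Set.indicator_of_mem (Set.mem_compl hy)]

/-- (Theorem A.) There is a continuous fixed point `U` of the
renormalization operator such that for every potential `V` of the form
`V = g/δ^α + h/δ^α` off `K` (with `g` continuous positive, `h` continuous vanishing
on `K`, `V` vanishing on `K`), and every `x ∉ K`: `R^m V(x) → 0` if `α > 1`,
`R^m V(x) → +∞` if `α < 1`, and `R^m V(x) → (∫ g dμ_K)·U(x)` if `α = 1`. -/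
theorem renorm_iterates_limit
    {A : Type*} [Fintype A] [DecidableEq A] [TopologicalSpace A] [DiscreteTopology A]
    [MeasurableSpace A] [BorelSpace A]
    (hD : 2 ≤ Fintype.card A)
    (H : A → List A) (hne : ∀ a, H a ≠ [])
    (hprim : PrimitiveSubst H) (haper : AperiodicSubst H)
    (hmarked : MarkedSubst H hne)
    (u : ℕ → A) (hu : IsFixedPointSubst H u) (h2full : TwoFull H u)
    (μ : Measure (ℕ → A)) [IsProbabilityMeasure μ]
    (hinv : Measure.map shift μ = μ) (hsupp : μ (orbitClosure u)ᶜ = 0)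
    (huniq : ∀ ν : Measure (ℕ → A), IsProbabilityMeasure ν →
      Measure.map shift ν = ν → ν (orbitClosure u)ᶜ = 0 → ν = μ) :
    ∃ U : (ℕ → A) → ℝ, Continuous U ∧ renorm H U = U ∧
      ∀ (α : ℝ), 0 < α →
        ∀ V g h : (ℕ → A) → ℝ,
          Continuous g → (∀ y, 0 < g y) →
          Continuous h → (∀ y ∈ orbitClosure u, h y = 0) →
          (∀ y ∈ orbitClosure u, V y = 0) →
          (∀ y ∉ orbitClosure u,
            V y = g y / (delta u y : ℝ) ^ α + h y / (delta u y : ℝ) ^ α) →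
          ∀ x ∉ orbitClosure u,
            (1 < α → Tendsto (fun m : ℕ => (renorm H)^[m] V x) atTop (𝓝 0)) ∧
            (α < 1 → Tendsto (fun m : ℕ => (renorm H)^[m] V x) atTop atTop) ∧
            (α = 1 → Tendsto (fun m : ℕ => (renorm H)^[m] V x) atTop
              (𝓝 ((∫ y, g y ∂μ) * U x))) := by
  have : Nontrivial A := Fintype.one_lt_card_iff_nontrivial.1 hD
  obtain ⟨l, hl⟩ := exists_desubstBound hprim haper hmarked hu
  obtain ⟨N, hN⟩ := hl.exists_forall_deltaScales hne hprim hu h2full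
  obtain ⟨v, hv⟩ := exists_isLengthProfile hne hprim hu huniq
  have hone := fun {G : (ℕ → A) → ℝ} (hG : Continuous G) =>
    tendsto_renorm_iterate_deltaPotential_one huniq hne hprim hu h2full hv hN hG
  refine ⟨(renorm H)^[N] (localLimit v u), Function.Iterate.rec Continuous
    (continuous_localLimit h2full hv.pos) (fun _ => continuous_renorm hne) N,
    renorm_eq_self_of_tendsto fun x => by
      simpa using hone (continuous_const (y := (1 : ℝ))) x,
    fun α hα V g h hg hgpos hh hh0 hV0 hV x hx => ?_⟩
  obtain rfl : V = deltaPotential u α (g + h) :=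
    eq_deltaPotential hV0 fun y hy => by rw [hV y hy, ← add_div, Pi.add_apply]
  have hpos : ∀ y ∈ orbitClosure u, 0 < (g + h) y := fun y hy => by simpa [hh0 y hy] using hgpos y
  refine ⟨tendsto_renorm_iterate_deltaPotential_zero hne hprim hu h2full hv (hN x) (hg.add hh),
    tendsto_renorm_iterate_deltaPotential_atTop hne hprim hu h2full hv (hN x)
      ((hl.mapsTo_substSeq_compl_orbitClosure hne).iterate N hx) (hg.add hh) hpos hα, ?_⟩
  rintro rfl
  have hint : ∫ y, (g + h) y ∂μ = ∫ y, g y ∂μ :=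
    integral_congr_ae <| Filter.mem_of_superset (compl_mem_ae_iff.2 hsupp) fun y hy => by
      simp [hh0 y (not_not.1 hy)]
  exact hint ▸ hone (hg.add hh) x
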